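/- arXiv:2208.06846 — 2 statements merged into one kernel-verified Lean document; each statement's English description precedes it below -/
import Mathlib

section
/- Let m ≥ 3, and let C, D ⊆ ℕ satisfy C ∪ D = [0, m], C ∩ D = {r_1, r_2} with r_1 < r_2, 0 ∈ C, and r_1 even. If R_C(n) = R_D(n) for every nonnegative integer n, then there exists a positive integer l such that r_1 = 2^{2l+1} − 2, r_2 = 2^{2l+1} − 1, m = 2^{2l+2} − 3, C = A_{2l+1} ∪ (2^{2l+1} − 2 + B_{2l+1}), and D = B_{2l+1} ∪ (2^{2l+1} − 2 + A_{2l+1}). -/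
open Set

/-- R S n: number of pairs (s,s') with s,s' ∈ S, s < s', s+s' = n. -/
noncomputable def R (S : Set ℕ) (n : ℕ) : ℕ :=
  {p : ℕ × ℕ | p.1 ∈ S ∧ p.2 ∈ S ∧ p.1 < p.2 ∧ p.1 + p.2 = n}.ncard

/-- Thue–Morse set: nonnegative integers with an even number of binary 1's. -/
def A : Set ℕ := {n | Even ((Nat.digits 2 n).count 1)}

def B : Set ℕ := Aᶜ

def Al (k : ℕ) : Set ℕ := A ∩ Set.Icc 0 (2 ^ k - 1)

def Bl (k : ℕ) : Set ℕ := B ∩ Set.Icc 0 (2 ^ k - 1)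

/-!
Let `c` and `d` be the generating polynomials of `C` and `D`, and put `E = c - d` and `S = c + d`.
Equality of the representation functions says `E(X) * S(X) = E(X ^ 2)`. Comparing multiplicities
of roots gives `S(1) = 2 ^ e` with `e` the multiplicity of `1` in `E`, so that `m + 3 = 2 ^ e`, and
`ord_{z ^ 2} E ≤ ord_z E + ord_z S` for all `z`. The primitive `2 ^ e`-th roots of unity are not
roots of `S`; if the other `2 ^ e`-th roots of unity were at most simple roots of `S`, these
inequalities would make all of them roots of `E`, whose degree is too small for that. Hence `S` has
a multiple root `z` with `z ^ (m + 3) = 1`.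

As `S = 1 + X + ⋯ + X ^ m + X ^ r₁ + X ^ r₂` is explicit, vanishing of `S` and its derivative at `z`
gives a quadratic relation for `z` with integer coefficients; as `z` is a root of unity, it forces
`r₂ = r₁ + 1` and `m = r₁ + r₂`, so `r₁ + 2 = 2 ^ k` with `k = e - 1`. The functional equation then
has the solution `(1 - X ^ r₁) * ∏ j < k, (1 - X ^ 2 ^ j)`, and it is the only one with constant
term `1`. Since the product expands with the Thue–Morse signs, this determines `C` and `D`.
-/

section GeneratingPolynomial

open Polynomial

/-- The generating polynomial `∑ i ∈ s, X ^ i` of a finite set of natural numbers. -/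
noncomputable def genPoly (K : Type*) [Semiring K] (s : Finset ℕ) : K[X] := ∑ i ∈ s, X ^ i

section Semiring

variable (K : Type*) [Semiring K]

lemma coeff_genPoly (s : Finset ℕ) (n : ℕ) :
    (genPoly K s).coeff n = if n ∈ s then 1 else 0 := by
  simp [genPoly, coeff_X_pow]

lemma genPoly_injective [Nontrivial K] : Function.Injective (genPoly K) := by
  intro s t h
  ext n
  have hn := congrArg (coeff · n) h
  simp only [coeff_genPoly] at hn
  split_ifs at hn <;> simp_all

lemma natDegree_genPoly_le {s : Finset ℕ} {n : ℕ} (hs : ∀ i ∈ s, i ≤ n) :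
    (genPoly K s).natDegree ≤ n :=
  natDegree_sum_le_of_forall_le s _ fun i hi ↦ (natDegree_X_pow_le i).trans (hs i hi)

lemma genPoly_union_image_add {s t : Finset ℕ} {r : ℕ} (h : Disjoint s (t.image (r + ·))) :
    genPoly K (s ∪ t.image (r + ·)) = genPoly K s + X ^ r * genPoly K t := by
  simp only [genPoly, Finset.sum_union h, Finset.mul_sum, ← pow_add,
    Finset.sum_image (add_right_injective r).injOn]

lemma genPoly_union_add_genPoly_inter (s t : Finset ℕ) :
    genPoly K (s ∪ t) + genPoly K (s ∩ t) = genPoly K s + genPoly K t :=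
  Finset.sum_union_inter

lemma coeff_sum_X_pow_add (s : Finset ℕ) (n : ℕ) :
    (∑ p ∈ s ×ˢ s with p.1 < p.2, (X : K[X]) ^ (p.1 + p.2)).coeff n = R s n := by
  have hset : {p : ℕ × ℕ | p.1 ∈ (s : Set ℕ) ∧ p.2 ∈ (s : Set ℕ) ∧ p.1 < p.2 ∧ p.1 + p.2 = n} =
      ({p ∈ s ×ˢ s | p.1 < p.2 ∧ n = p.1 + p.2} : Finset (ℕ × ℕ)) := by
    ext p
    simp [and_assoc, eq_comm]
  rw [R, hset, Set.ncard_coe_finset, ← Finset.filter_filter]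
  simp only [finsetSum_coeff, coeff_X_pow, Finset.sum_boole]

end Semiring

section CommSemiring

variable (K : Type*) [CommSemiring K]

lemma expand_genPoly (n : ℕ) (s : Finset ℕ) :
    expand K n (genPoly K s) = ∑ i ∈ s, X ^ (n * i) := by
  simp [genPoly, pow_mul]

lemma genPoly_sq (s : Finset ℕ) :
    genPoly K s ^ 2 =
      expand K 2 (genPoly K s) + 2 * ∑ p ∈ s ×ˢ s with p.1 < p.2, X ^ (p.1 + p.2) := by
  have hdiag : ∑ p ∈ s ×ˢ s with p.1 = p.2, (X : K[X]) ^ (p.1 + p.2) =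
      expand K 2 (genPoly K s) := by
    rw [expand_genPoly, Finset.sum_filter, Finset.sum_product]
    refine Finset.sum_congr rfl fun i hi ↦ ?_
    simp [hi, two_mul]
  have hswap : ∑ p ∈ s ×ˢ s with p.2 < p.1, (X : K[X]) ^ (p.1 + p.2) =
      ∑ p ∈ s ×ˢ s with p.1 < p.2, X ^ (p.1 + p.2) := by
    simp only [Finset.sum_filter]
    rw [Finset.sum_product, Finset.sum_product_right]
    simp only [add_comm]
  calc genPoly K s ^ 2
      = ∑ p ∈ s ×ˢ s, X ^ (p.1 + p.2) := by
        simp only [genPoly, sq, Finset.sum_mul_sum, Finset.sum_product, pow_add]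
    _ = ∑ p ∈ s ×ˢ s with p.1 = p.2, X ^ (p.1 + p.2) +
          (∑ p ∈ s ×ˢ s with p.1 < p.2, X ^ (p.1 + p.2) +
            ∑ p ∈ s ×ˢ s with p.2 < p.1, X ^ (p.1 + p.2)) := by
        simp only [Finset.sum_filter, ← Finset.sum_add_distrib]
        refine Finset.sum_congr rfl fun p _ ↦ ?_
        rcases lt_trichotomy p.1 p.2 with h | h | h
        · simp [h, h.ne, h.not_gt]
        · simp [h]
        · simp [h, h.ne', h.not_gt]
    _ = _ := by rw [hdiag, hswap, two_mul]

end CommSemiring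

section CommRing

variable (K : Type*) [CommRing K]

lemma genPoly_sub_mul_genPoly_add {s t : Finset ℕ} (h : ∀ n, R s n = R t n) :
    (genPoly K s - genPoly K t) * (genPoly K s + genPoly K t) =
      expand K 2 (genPoly K s - genPoly K t) := by
  have hpairs : ∑ p ∈ s ×ˢ s with p.1 < p.2, (X : K[X]) ^ (p.1 + p.2) =
      ∑ p ∈ t ×ˢ t with p.1 < p.2, X ^ (p.1 + p.2) := by
    ext n
    rw [coeff_sum_X_pow_add, coeff_sum_X_pow_add, h]
  rw [mul_comm, ← sq_sub_sq, genPoly_sq, genPoly_sq, hpairs, map_sub]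
  ring

variable {K} [CharZero K]

lemma eq_and_eq_of_genPoly_sub_eq_of_inter_eq {s t s' t' : Finset ℕ}
    (hsub : genPoly K s - genPoly K t = genPoly K s' - genPoly K t') (hinter : s ∩ t = s' ∩ t') :
    s = s' ∧ t = t' := by
  have key (n : ℕ) : (n ∈ s ↔ n ∈ s') ∧ (n ∈ t ↔ n ∈ t') := by
    have hn := congrArg (coeff · n) hsub
    have hn' := congrArg (n ∈ ·) hinter
    simp only [coeff_sub, coeff_genPoly, sub_eq_sub_iff_add_eq_add] at hn
    simp only [Finset.mem_inter] at hn'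
    by_cases n ∈ s <;> by_cases n ∈ t <;> by_cases n ∈ s' <;> by_cases n ∈ t' <;>
      simp_all [one_add_one_eq_two]
  exact ⟨Finset.ext fun n ↦ (key n).1, Finset.ext fun n ↦ (key n).2⟩

end CommRing

end GeneratingPolynomial

section FunctionalEquation

open Polynomial

variable {K : Type*} [CommRing K]

lemma rootMultiplicity_pow_le_rootMultiplicity_expand {n : ℕ} (hn : 0 < n) {f : K[X]}
    (hf : f ≠ 0) (z : K) : rootMultiplicity (z ^ n) f ≤ rootMultiplicity z (expand K n f) := by
  rw [le_rootMultiplicity_iff ((expand_ne_zero hn).2 hf)]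
  have hdvd : X - C z ∣ expand K n (X - C (z ^ n)) := by
    simpa using sub_dvd_pow_sub_pow X (C z) n
  have hpow := map_dvd (expand K n) (pow_rootMultiplicity_dvd f (z ^ n))
  rw [map_pow] at hpow
  exact (pow_dvd_pow_of_dvd hdvd _).trans hpow

variable [IsDomain K] {E S : K[X]}

lemma rootMultiplicity_sq_le_of_mul_eq_expand (hE : E ≠ 0) (hES : E * S = expand K 2 E) (z : K) :
    rootMultiplicity (z ^ 2) E ≤ rootMultiplicity z E + rootMultiplicity z S := by
  have hne : E * S ≠ 0 := hES ▸ (expand_ne_zero two_pos).2 hE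
  rw [← rootMultiplicity_mul hne, hES]
  exact rootMultiplicity_pow_le_rootMultiplicity_expand two_pos hE z

/- Since `X ^ 2 - z = (X - z) * (X + z)`, the factor `(X - z) ^ rootMultiplicity z E` cancels from
the functional equation; evaluate what remains at `z`. -/
lemma eval_eq_pow_rootMultiplicity_of_mul_eq_expand (hE : E ≠ 0) (hES : E * S = expand K 2 E)
    {z : K} (hz : z ^ 2 = z) : S.eval z = (z + z) ^ rootMultiplicity z E := by
  obtain ⟨F, hF, hFz⟩ := exists_eq_pow_rootMultiplicity_mul_and_not_dvd E hE z
  set e := rootMultiplicity z E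
  have hexpand : expand K 2 E = (X - C z) ^ e * ((X + C z) ^ e * expand K 2 F) := by
    have hlin : expand K 2 (X - C z) = (X - C z) * (X + C z) := by
      rw [map_sub, expand_X, expand_C]
      nth_rw 1 [← hz, C_pow]
      ring
    conv_lhs => rw [hF]
    rw [map_mul, map_pow, hlin, mul_pow, mul_assoc]
  have hFS : F * S = (X + C z) ^ e * expand K 2 F := by
    refine mul_left_cancel₀ (pow_ne_zero e (X_sub_C_ne_zero z)) ?_
    rw [← hexpand, ← hES, ← mul_assoc, ← hF]
  have heval := congrArg (eval z) hFS
  simp only [eval_mul, eval_pow, eval_add, eval_X, eval_C, expand_eval, hz] at heval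
  rw [dvd_iff_isRoot, IsRoot.def] at hFz
  exact mul_left_cancel₀ hFz (heval.trans (mul_comm _ _))

lemma eq_of_mul_eq_expand {E' : K[X]} (hES : E * S = expand K 2 E)
    (hES' : E' * S = expand K 2 E') (hS : S.coeff 0 = 1) (h0 : E.coeff 0 = E'.coeff 0) :
    E = E' := by
  rw [← sub_eq_zero]
  by_contra hne
  have hpow := eval_eq_pow_rootMultiplicity_of_mul_eq_expand hne
    (by rw [sub_mul, hES, hES', map_sub]) (zero_pow two_ne_zero)
  have hroot : IsRoot (E - E') 0 := by
    rw [IsRoot.def, ← coeff_zero_eq_eval_zero, coeff_sub, h0, sub_self]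
  rw [← coeff_zero_eq_eval_zero, hS, add_zero,
    zero_pow ((rootMultiplicity_pos hne).2 hroot).ne'] at hpow
  exact one_ne_zero hpow

lemma rootMultiplicity_one_le_add_of_pow_eq_one (hE : E ≠ 0) (hES : E * S = expand K 2 E) {N j : ℕ}
    (hS : ∀ z : K, z ^ 2 ^ N = 1 → rootMultiplicity z S ≤ 1) (hj : j ≤ N) {z : K}
    (hz : z ^ 2 ^ j = 1) : rootMultiplicity 1 E ≤ rootMultiplicity z E + j := by
  induction j generalizing z with
  | zero => simp_all
  | succ j ih =>
    have hsq := ih (by lia) (z := z ^ 2) (by rw [← pow_mul, ← pow_succ', hz])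
    have hzN : z ^ 2 ^ N = 1 := by
      obtain ⟨d, hd⟩ := pow_dvd_pow 2 hj
      rw [hd, pow_mul, hz, one_pow]
    have hle := rootMultiplicity_sq_le_of_mul_eq_expand hE hES z
    have := hS z hzN
    lia

/- If all `2 ^ (k + 1)`-th roots of unity were at most simple roots of `S`, they would all be roots
of `E`: squaring leads from `z` to `1`, along which the multiplicity in `E` grows by at most one in
each of at most `k` steps, the step from a primitive `z` being free. But `E` has too few roots. -/
lemma exists_one_lt_rootMultiplicity (hE : E ≠ 0) (hES : E * S = expand K 2 E) {k : ℕ}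
    (hk : rootMultiplicity 1 E = k + 1) (hdeg : E.natDegree < 2 ^ (k + 1)) {ζ : K}
    (hζ : IsPrimitiveRoot ζ (2 ^ (k + 1)))
    (hS : ∀ z : K, IsPrimitiveRoot z (2 ^ (k + 1)) → ¬ IsRoot S z) :
    ∃ z : K, z ^ 2 ^ (k + 1) = 1 ∧ 1 < rootMultiplicity z S := by
  by_contra! hsimple
  refine hE (eq_zero_of_natDegree_lt_card_of_eval_eq_zero' E
    (nthRootsFinset (2 ^ (k + 1)) (1 : K)) (fun z hz ↦ ?_) (hζ.card_nthRootsFinset.symm ▸ hdeg))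
  rw [mem_nthRootsFinset (by positivity)] at hz
  suffices 0 < rootMultiplicity z E from (rootMultiplicity_pos hE).1 this
  by_cases hz' : z ^ 2 ^ k = 1
  · have := rootMultiplicity_one_le_add_of_pow_eq_one hE hES hsimple k.le_succ hz'
    lia
  · have hprim : IsPrimitiveRoot z (2 ^ (k + 1)) :=
      IsPrimitiveRoot.iff_orderOf.2 (orderOf_eq_prime_pow hz' hz)
    have hzero : rootMultiplicity z S = 0 := rootMultiplicity_eq_zero (hS z hprim)
    have hsq := rootMultiplicity_sq_le_of_mul_eq_expand hE hES z
    have := rootMultiplicity_one_le_add_of_pow_eq_one hE hES hsimple k.le_succ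
      (z := z ^ 2) (by rw [← pow_mul, ← pow_succ', hz])
    lia

end FunctionalEquation

section UnitCircle

open ComplexConjugate

lemma eq_or_eq_of_add_eq_add_of_norm_eq_one {a b c d : ℂ} (ha : ‖a‖ = 1) (hb : ‖b‖ = 1)
    (hc : ‖c‖ = 1) (hd : ‖d‖ = 1) (h : a + b = c + d) (hne : a + b ≠ 0) : a = c ∨ a = d := by
  have hne0 {z : ℂ} (hz : ‖z‖ = 1) : z ≠ 0 := norm_ne_zero_iff.1 (hz ▸ one_ne_zero)
  have hconj : a⁻¹ + b⁻¹ = c⁻¹ + d⁻¹ := by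
    simpa only [map_add, ← Complex.inv_eq_conj ha, ← Complex.inv_eq_conj hb,
      ← Complex.inv_eq_conj hc, ← Complex.inv_eq_conj hd] using congrArg conj h
  have hprod : a * b = c * d := by
    refine mul_left_cancel₀ hne ?_
    rw [inv_add_inv (hne0 ha) (hne0 hb), inv_add_inv (hne0 hc) (hne0 hd), ← h,
      div_eq_div_iff (mul_ne_zero (hne0 ha) (hne0 hb)) (mul_ne_zero (hne0 hc) (hne0 hd))] at hconj
    exact hconj.symm
  have hfactor : (a - c) * (a - d) = 0 := by linear_combination a * h - hprod
  simpa only [mul_eq_zero, sub_eq_zero] using hfactor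

lemma eq_of_add_mul_sq_eq_mul {z : ℂ} (hz : ‖z‖ = 1) {a b c : ℝ} (hb : |b| < a + c)
    (h : a + c * z ^ 2 = b * z) : a = c := by
  have hz0 : z ≠ 0 := norm_ne_zero_iff.1 (hz ▸ one_ne_zero)
  have hconj : a * z ^ 2 + c = b * z := by
    have hinv : (a : ℂ) + c * z⁻¹ ^ 2 = b * z⁻¹ := by
      simpa [Complex.inv_eq_conj hz] using congrArg conj h
    field_simp at hinv
    linear_combination hinv
  obtain ⟨hneg, hpos⟩ := abs_lt.1 hb
  have hfactor : ((a : ℂ) - c) * ((z - 1) * (z + 1)) = 0 := by linear_combination hconj - h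
  rcases mul_eq_zero.1 hfactor with h' | h'
  · exact_mod_cast sub_eq_zero.1 h'
  rcases mul_eq_zero.1 h' with h' | h'
  · refine absurd ?_ hpos.ne'
    rw [sub_eq_zero.1 h'] at h
    exact_mod_cast (by linear_combination h : (a + c : ℂ) = b)
  · refine absurd ?_ hneg.ne
    rw [eq_neg_of_add_eq_zero_left h'] at h
    exact_mod_cast (by linear_combination -h : (-(a + c) : ℂ) = b)

/- The quotient `b / a = z + z⁻¹` is rational and integral over `ℤ`, hence an integer. -/
lemma dvd_of_add_mul_sq_eq_mul {z : ℂ} {n : ℕ} (hn : 0 < n) (hz : z ^ n = 1) {a b : ℤ}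
    (ha : a ≠ 0) (h : a + a * z ^ 2 = b * z) : a ∣ b := by
  have hz0 : z ≠ 0 := fun h0 ↦ by simp [h0, hn.ne'] at hz
  have hint : IsIntegral ℤ z := .of_pow hn (hz ▸ isIntegral_one)
  have hint' : IsIntegral ℤ z⁻¹ := .of_pow hn (by rw [inv_pow, hz, inv_one]; exact isIntegral_one)
  have ha0 : (a : ℂ) ≠ 0 := Int.cast_ne_zero.2 ha
  have hrat : z + z⁻¹ = ((b / a : ℚ) : ℂ) := by
    push_cast
    field_simp
    linear_combination h
  obtain ⟨k, hk⟩ := (hint.add hint').exists_int_iff_exists_rat.1 ⟨_, hrat⟩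
  refine ⟨k, ?_⟩
  have hbk : (b : ℂ) = a * k := by
    rw [← hk]
    field_simp
    linear_combination -h
  exact_mod_cast hbk

lemma eq_zero_and_eq_of_add_mul_sq_eq_mul {z : ℂ} {n : ℕ} (hn : 0 < n) (hz : z ^ n = 1)
    {a b c : ℤ} (ha : 0 < a) (hb : 0 ≤ b) (hbc : b < c) (h : a + c * z ^ 2 = b * z) :
    b = 0 ∧ a = c := by
  have hlt : |(b : ℝ)| < a + c := by
    rw [← Int.cast_abs, abs_of_nonneg hb]
    exact_mod_cast (by lia : b < a + c)
  have hac : a = c := by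
    exact_mod_cast eq_of_add_mul_sq_eq_mul (Complex.norm_eq_one_of_pow_eq_one hz hn.ne') hlt
      (by exact_mod_cast h)
  subst hac
  exact ⟨Int.eq_zero_of_dvd_of_nonneg_of_lt hb hbc (dvd_of_add_mul_sq_eq_mul hn hz ha.ne' h), rfl⟩

end UnitCircle

section CoverPoly

open Polynomial

/-- The sum `1 + X + ⋯ + X ^ m + X ^ r₁ + X ^ r₂` of the generating polynomials of two sets whose
union is `[0, m]` and whose intersection is `{r₁, r₂}`. -/
noncomputable def coverPoly (K : Type*) [Semiring K] (m r₁ r₂ : ℕ) : K[X] :=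
  ∑ i ∈ Finset.range (m + 1), X ^ i + (X ^ r₁ + X ^ r₂)

lemma genPoly_add_genPoly_eq_coverPoly (K : Type*) [Semiring K] {s t : Finset ℕ} {m r₁ r₂ : ℕ}
    (hunion : s ∪ t = Finset.range (m + 1)) (hinter : s ∩ t = {r₁, r₂}) (hne : r₁ ≠ r₂) :
    genPoly K s + genPoly K t = coverPoly K m r₁ r₂ := by
  rw [← genPoly_union_add_genPoly_inter, hunion, hinter]
  simp only [genPoly, coverPoly, Finset.sum_pair hne]

lemma eval_one_coverPoly (K : Type*) [CommSemiring K] (m r₁ r₂ : ℕ) :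
    (coverPoly K m r₁ r₂).eval 1 = (m + 3 : ℕ) := by
  simp only [coverPoly, eval_add, eval_finsetSum, eval_pow, eval_X, one_pow, Finset.sum_const,
    Finset.card_range, nsmul_eq_mul]
  push_cast
  ring

lemma one_sub_X_mul_coverPoly (K : Type*) [CommRing K] (m r₁ r₂ : ℕ) :
    (1 - X) * coverPoly K m r₁ r₂ = 1 - X ^ (m + 1) + (1 - X) * (X ^ r₁ + X ^ r₂) := by
  rw [coverPoly, mul_add, mul_neg_geom_sum]

section CommRing

variable {K : Type*} [CommRing K] {m r₁ r₂ : ℕ} {z : K}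

lemma pow_add_pow_eq_of_isRoot_coverPoly [IsDomain K] (hz : z ^ (m + 3) = 1) (hz1 : z ≠ 1)
    (hroot : IsRoot (coverPoly K m r₁ r₂) z) :
    z ^ r₁ + z ^ r₂ = z ^ (m + 1) + z ^ (m + 2) := by
  have h := congrArg (eval z) (one_sub_X_mul_coverPoly K m r₁ r₂)
  simp only [eval_mul, eval_sub, eval_add, eval_one, eval_X, eval_pow, hroot.eq_zero] at h
  refine mul_left_cancel₀ (sub_ne_zero.2 hz1.symm) ?_
  linear_combination hz - h

lemma eval_derivative_X_pow_mul (n : ℕ) : z * eval z (derivative (X ^ n)) = n * z ^ n := by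
  cases n with
  | zero => simp
  | succ n =>
    simp only [derivative_X_pow, eval_mul, eval_C, eval_pow, eval_X, Nat.add_sub_cancel]
    ring

/- Differentiate `(1 - X) * coverPoly` at `z`; there `z ^ (m + 1) = z⁻¹ ^ 2` and
`z ^ (m + 2) = z⁻¹`. -/
lemma sub_add_mul_sq_eq_mul_of_isRoot_derivative_coverPoly (hz : z ^ (m + 3) = 1)
    (hr₁ : z ^ r₁ = z ^ (m + 1)) (hr₂ : z ^ r₂ = z ^ (m + 2))
    (hroot : IsRoot (coverPoly K m r₁ r₂) z)
    (hroot' : IsRoot (derivative (coverPoly K m r₁ r₂)) z) :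
    (m + 1 - r₁) + (r₂ + 1) * z ^ 2 = (r₂ - r₁ - 1) * z := by
  have h := congrArg (fun p ↦ z * eval z (derivative p)) (one_sub_X_mul_coverPoly K m r₁ r₂)
  simp only [derivative_mul, derivative_add, derivative_sub, derivative_one, derivative_X,
    eval_add, eval_sub, eval_mul, eval_pow, eval_one, eval_X, eval_zero, mul_add, mul_sub,
    mul_left_comm z _ (eval z (derivative _)), eval_derivative_X_pow_mul, hroot.eq_zero,
    hroot'.eq_zero, hr₁, hr₂] at h
  push_cast at h
  linear_combination z ^ 2 * h -
    ((m + 1 - r₁) + (r₂ + 1) * z ^ 2 - (r₂ - r₁ - 1) * z) * hz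

end CommRing

section Complex

variable {m r₁ r₂ : ℕ} {z : ℂ}

lemma pow_eq_or_pow_eq_of_isRoot_coverPoly (hz : z ^ (m + 3) = 1) (hz1 : z ≠ 1) (hz2 : z ≠ -1)
    (hroot : IsRoot (coverPoly ℂ m r₁ r₂) z) : z ^ r₁ = z ^ (m + 1) ∨ z ^ r₁ = z ^ (m + 2) := by
  have hnorm (n : ℕ) : ‖z ^ n‖ = 1 := by
    rw [norm_pow, Complex.norm_eq_one_of_pow_eq_one hz (by lia), one_pow]
  have hsum := pow_add_pow_eq_of_isRoot_coverPoly hz hz1 hroot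
  refine eq_or_eq_of_add_eq_add_of_norm_eq_one (hnorm _) (hnorm _) (hnorm _) (hnorm _) hsum ?_
  have hfactor : z ^ (m + 1) + z ^ (m + 2) = z ^ (m + 1) * (z + 1) := by ring
  rw [hsum, hfactor]
  exact mul_ne_zero (norm_ne_zero_iff.1 (hnorm _ ▸ one_ne_zero))
    fun h ↦ hz2 (eq_neg_of_add_eq_zero_left h)

lemma not_isRoot_coverPoly_of_isPrimitiveRoot (hz : IsPrimitiveRoot z (m + 3)) (hr₁ : r₁ ≤ m) :
    ¬ IsRoot (coverPoly ℂ m r₁ r₂) z := by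
  intro hroot
  have hz2 : z ≠ -1 := by
    rintro rfl
    have := Nat.le_of_dvd two_pos (hz.dvd_of_pow_eq_one 2 neg_one_sq)
    lia
  rcases pow_eq_or_pow_eq_of_isRoot_coverPoly hz.pow_eq_one (hz.ne_one (by lia)) hz2 hroot
    with h | h <;>
  · have := hz.pow_inj (by lia) (by lia) h
    lia

lemma pow_eq_and_pow_eq_of_isRoot_coverPoly {k : ℕ} (hm : m + 3 = 2 ^ k) (hr₁ : Even r₁)
    (hz : z ^ (m + 3) = 1) (hz1 : z ≠ 1) (hroot : IsRoot (coverPoly ℂ m r₁ r₂) z) :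
    z ^ r₁ = z ^ (m + 1) ∧ z ^ r₂ = z ^ (m + 2) := by
  have hsum := pow_add_pow_eq_of_isRoot_coverPoly hz hz1 hroot
  suffices h : z ^ r₁ = z ^ (m + 1) from ⟨h, add_left_cancel (h ▸ hsum)⟩
  by_cases hz2 : z = -1
  · subst hz2
    rw [pow_add _ (m + 1) 2, neg_one_sq, mul_one] at hz
    rw [hr₁.neg_one_pow, hz]
  refine (pow_eq_or_pow_eq_of_isRoot_coverPoly hz hz1 hz2 hroot).resolve_right fun h ↦ hz1 ?_
  have hodd : z ^ (r₁ + 1) = 1 := by rw [pow_succ, h, ← pow_succ, hz]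
  have hcop : Nat.gcd (r₁ + 1) (2 ^ k) = 1 := hr₁.add_one.coprime_two_right.pow_right k
  rw [← pow_one z, ← hcop, pow_gcd_eq_one]
  exact ⟨hodd, hm ▸ hz⟩

lemma eq_add_one_and_eq_add_of_one_lt_rootMultiplicity {k : ℕ} (hm : m + 3 = 2 ^ k)
    (hr₁ : Even r₁) (hlt : r₁ < r₂) (hle : r₂ ≤ m) (hz : z ^ (m + 3) = 1)
    (hmult : 1 < rootMultiplicity z (coverPoly ℂ m r₁ r₂)) : r₂ = r₁ + 1 ∧ m = r₁ + r₂ := by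
  have hne : coverPoly ℂ m r₁ r₂ ≠ 0 := fun h ↦ by simp [h] at hmult
  obtain ⟨hroot, hroot'⟩ := (one_lt_rootMultiplicity_iff_isRoot hne).1 hmult
  have hz1 : z ≠ 1 := by
    rintro rfl
    rw [IsRoot.def, eval_one_coverPoly] at hroot
    exact Nat.cast_ne_zero.2 (by lia) hroot
  obtain ⟨hpow₁, hpow₂⟩ := pow_eq_and_pow_eq_of_isRoot_coverPoly hm hr₁ hz hz1 hroot
  have hrel := sub_add_mul_sq_eq_mul_of_isRoot_derivative_coverPoly hz hpow₁ hpow₂ hroot hroot'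
  have hint := eq_zero_and_eq_of_add_mul_sq_eq_mul (by lia) hz
    (a := m + 1 - r₁) (b := r₂ - r₁ - 1) (c := r₂ + 1) (by lia) (by lia) (by lia)
    (by exact_mod_cast hrel)
  lia

end Complex

end CoverPoly

section ThueMorse

open Polynomial

lemma zero_mem_A : 0 ∈ A := by
  simp [A]

lemma two_mul_mem_A_iff {n : ℕ} : 2 * n ∈ A ↔ n ∈ A := by
  rcases n.eq_zero_or_pos with rfl | hn
  · rw [mul_zero]
  · simp [A, Nat.digits_def' one_lt_two (Nat.mul_pos two_pos hn)]

lemma two_mul_add_one_mem_A_iff {n : ℕ} : 2 * n + 1 ∈ A ↔ n ∉ A := by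
  have hdiv : (2 * n + 1) / 2 = n := by lia
  simp [A, hdiv, Nat.even_add_one]

lemma one_notMem_A : 1 ∉ A :=
  two_mul_add_one_mem_A_iff.not.2 (not_not.2 zero_mem_A)

lemma two_pow_add_mem_A_iff {k n : ℕ} (hn : n < 2 ^ k) : 2 ^ k + n ∈ A ↔ n ∉ A := by
  induction k generalizing n with
  | zero =>
    obtain rfl : n = 0 := by simpa using hn
    simp [zero_mem_A, one_notMem_A]
  | succ k ih =>
    rw [pow_succ'] at hn ⊢
    obtain ⟨i, rfl | rfl⟩ := n.even_or_odd'
    · rw [← mul_add, two_mul_mem_A_iff, two_mul_mem_A_iff, ih (by lia)]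
    · rw [← add_assoc, ← mul_add, two_mul_add_one_mem_A_iff, two_mul_add_one_mem_A_iff,
        ih (by lia)]

lemma mem_A_iff_even_of_add_one_eq_two_pow {n k : ℕ} (h : n + 1 = 2 ^ k) : n ∈ A ↔ Even k := by
  induction k generalizing n with
  | zero => simp_all [zero_mem_A]
  | succ k ih =>
    obtain ⟨i, rfl⟩ : ∃ i, n = 2 * i + 1 := ⟨2 ^ k - 1, by lia⟩
    rw [two_mul_add_one_mem_A_iff, ih (by lia), Nat.even_add_one]

lemma mem_A_iff_odd_of_add_two_eq_two_pow {n k : ℕ} (h : n + 2 = 2 ^ k) : n ∈ A ↔ Odd k := by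
  cases k with
  | zero => lia
  | succ k =>
    obtain ⟨i, rfl⟩ : ∃ i, n = 2 * i := ⟨2 ^ k - 1, by lia⟩
    rw [two_mul_mem_A_iff, mem_A_iff_even_of_add_one_eq_two_pow (by lia : i + 1 = 2 ^ k),
      Nat.odd_add_one, Nat.not_odd_iff_even]

open Classical in
/-- The evil numbers (even binary digit sum) below `2 ^ k`: the set `Al k` as a `Finset`. -/
noncomputable def evilFinset (k : ℕ) : Finset ℕ := {n ∈ Finset.range (2 ^ k) | n ∈ A}

open Classical in
/-- The odious numbers (odd binary digit sum) below `2 ^ k`: the set `Bl k` as a `Finset`. -/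
noncomputable def odiousFinset (k : ℕ) : Finset ℕ := {n ∈ Finset.range (2 ^ k) | n ∉ A}

lemma mem_evilFinset {k n : ℕ} : n ∈ evilFinset k ↔ n < 2 ^ k ∧ n ∈ A := by
  simp [evilFinset]

lemma mem_odiousFinset {k n : ℕ} : n ∈ odiousFinset k ↔ n < 2 ^ k ∧ n ∉ A := by
  simp [odiousFinset]

lemma coe_evilFinset (k : ℕ) : (evilFinset k : Set ℕ) = Al k := by
  ext n
  have := Nat.two_pow_pos k
  simp only [Finset.mem_coe, mem_evilFinset, Al, mem_inter_iff, mem_Icc]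
  grind

lemma coe_odiousFinset (k : ℕ) : (odiousFinset k : Set ℕ) = Bl k := by
  ext n
  have := Nat.two_pow_pos k
  simp only [Finset.mem_coe, mem_odiousFinset, Bl, B, mem_inter_iff, mem_compl_iff, mem_Icc]
  grind

lemma disjoint_image_two_pow_add {k : ℕ} {s t : Finset ℕ} (hs : ∀ n ∈ s, n < 2 ^ k) :
    Disjoint s (t.image (2 ^ k + ·)) := by
  simp only [Finset.disjoint_left, Finset.mem_image, not_exists, not_and]
  intro n hn x _ hx
  have := hs n hn
  lia

lemma evilFinset_succ (k : ℕ) :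
    evilFinset (k + 1) = evilFinset k ∪ (odiousFinset k).image (2 ^ k + ·) := by
  ext n
  simp only [Finset.mem_union, Finset.mem_image, mem_evilFinset, mem_odiousFinset, pow_succ]
  rcases lt_or_ge n (2 ^ k) with hn | hn
  · grind
  · obtain ⟨x, rfl⟩ := Nat.exists_eq_add_of_le hn
    grind [two_pow_add_mem_A_iff]

lemma odiousFinset_succ (k : ℕ) :
    odiousFinset (k + 1) = odiousFinset k ∪ (evilFinset k).image (2 ^ k + ·) := by
  ext n
  simp only [Finset.mem_union, Finset.mem_image, mem_evilFinset, mem_odiousFinset, pow_succ]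
  rcases lt_or_ge n (2 ^ k) with hn | hn
  · grind
  · obtain ⟨x, rfl⟩ := Nat.exists_eq_add_of_le hn
    grind [two_pow_add_mem_A_iff]

section OddExponent

variable {r k : ℕ} (hr : r + 2 = 2 ^ k) (hk : Odd k)
include hr hk

lemma mem_A_and_add_one_notMem_A : r ∈ A ∧ r + 1 ∉ A :=
  ⟨(mem_A_iff_odd_of_add_two_eq_two_pow hr).2 hk,
    (mem_A_iff_even_of_add_one_eq_two_pow hr).not.2 (Nat.not_even_iff_odd.2 hk)⟩

lemma disjoint_evilFinset_image_odiousFinset :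
    Disjoint (evilFinset k) ((odiousFinset k).image (r + ·)) := by
  obtain ⟨-, hr'⟩ := mem_A_and_add_one_notMem_A hr hk
  simp only [Finset.disjoint_left, Finset.mem_image, mem_evilFinset, mem_odiousFinset]
  rintro _ ⟨hlt, hA⟩ ⟨x, ⟨-, hx⟩, rfl⟩
  have hx2 : x < 2 := by lia
  interval_cases x
  exacts [hx zero_mem_A, hr' hA]

lemma disjoint_odiousFinset_image_evilFinset :
    Disjoint (odiousFinset k) ((evilFinset k).image (r + ·)) := by
  obtain ⟨hr', -⟩ := mem_A_and_add_one_notMem_A hr hk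
  simp only [Finset.disjoint_left, Finset.mem_image, mem_evilFinset, mem_odiousFinset]
  rintro _ ⟨hlt, hA⟩ ⟨x, ⟨-, hx⟩, rfl⟩
  have hx2 : x < 2 := by lia
  interval_cases x
  exacts [hA hr', one_notMem_A hx]

lemma union_image_inter_union_image_eq_pair :
    (evilFinset k ∪ (odiousFinset k).image (r + ·)) ∩
      (odiousFinset k ∪ (evilFinset k).image (r + ·)) = {r, r + 1} := by
  obtain ⟨hrA, hrA'⟩ := mem_A_and_add_one_notMem_A hr hk
  ext n
  simp only [Finset.mem_inter, Finset.mem_union, Finset.mem_image, mem_evilFinset,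
    mem_odiousFinset, Finset.mem_insert, Finset.mem_singleton]
  constructor
  · rintro ⟨⟨hlt, hA⟩ | ⟨x, ⟨-, hx⟩, rfl⟩, ⟨hlt', hA'⟩ | ⟨y, ⟨-, hy⟩, hxy⟩⟩
    · exact absurd hA hA'
    · lia
    · lia
    · exact absurd (add_left_cancel hxy ▸ hy) hx
  · rintro (rfl | rfl)
    · exact ⟨.inl ⟨by lia, hrA⟩, .inr ⟨0, ⟨by lia, zero_mem_A⟩, rfl⟩⟩
    · exact ⟨.inr ⟨1, ⟨by lia, one_notMem_A⟩, rfl⟩, .inl ⟨by lia, hrA'⟩⟩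

end OddExponent

lemma prod_one_sub_X_pow_two_pow (K : Type*) [CommRing K] (k : ℕ) :
    ∏ j ∈ Finset.range k, (1 - X ^ 2 ^ j) =
      genPoly K (evilFinset k) - genPoly K (odiousFinset k) := by
  induction k with
  | zero => simp [evilFinset, odiousFinset, genPoly, Finset.sum_filter, zero_mem_A]
  | succ k ih =>
    rw [Finset.prod_range_succ, ih, evilFinset_succ, odiousFinset_succ,
      genPoly_union_image_add _ (disjoint_image_two_pow_add fun n hn ↦ (mem_evilFinset.1 hn).1),
      genPoly_union_image_add _ (disjoint_image_two_pow_add fun n hn ↦ (mem_odiousFinset.1 hn).1)]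
    ring

lemma one_sub_X_mul_expand_prod (K : Type*) [CommRing K] (k : ℕ) :
    (1 - X) * expand K 2 (∏ j ∈ Finset.range k, (1 - X ^ 2 ^ j)) =
      (∏ j ∈ Finset.range k, (1 - X ^ 2 ^ j)) * (1 - X ^ 2 ^ k) := by
  rw [← Finset.prod_range_succ, Finset.prod_range_succ', pow_zero, pow_one, mul_comm, map_prod]
  congr! 2 with j
  rw [map_sub, map_one, map_pow, expand_X, ← pow_mul, pow_succ']

lemma one_sub_X_pow_mul_prod_mul_coverPoly {K : Type*} [CommRing K] [IsDomain K] {r k : ℕ}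
    (hr : r + 2 = 2 ^ k) :
    (1 - X ^ r) * (∏ j ∈ Finset.range k, (1 - X ^ 2 ^ j)) * coverPoly K (r + (r + 1)) r (r + 1) =
      expand K 2 ((1 - X ^ r) * ∏ j ∈ Finset.range k, (1 - X ^ 2 ^ j)) := by
  have hcover : (1 - X) * coverPoly K (r + (r + 1)) r (r + 1) = (1 + X ^ r) * (1 - X ^ 2 ^ k) := by
    rw [one_sub_X_mul_coverPoly, ← hr]
    ring
  have hne : (1 - X : K[X]) ≠ 0 := sub_ne_zero.2 (X_ne_C (1 : K)).symm
  refine mul_left_cancel₀ hne ?_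
  rw [map_mul, map_sub, map_one, map_pow, expand_X]
  linear_combination (1 - X ^ r) * (∏ j ∈ Finset.range k, (1 - X ^ 2 ^ j)) * hcover -
    (1 - X ^ (2 * r)) * one_sub_X_mul_expand_prod K k


lemma genPoly_sub_genPoly_union_image (K : Type*) [CommRing K] {r k : ℕ} (hr : r + 2 = 2 ^ k)
    (hk : Odd k) :
    genPoly K (evilFinset k ∪ (odiousFinset k).image (r + ·)) -
        genPoly K (odiousFinset k ∪ (evilFinset k).image (r + ·)) =
      (1 - X ^ r) * ∏ j ∈ Finset.range k, (1 - X ^ 2 ^ j) := by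
  rw [genPoly_union_image_add _ (disjoint_evilFinset_image_odiousFinset hr hk),
    genPoly_union_image_add _ (disjoint_odiousFinset_image_evilFinset hr hk),
    prod_one_sub_X_pow_two_pow]
  ring

end ThueMorse

section Rigidity

open Polynomial

lemma eq_add_one_and_eq_add_and_add_two_eq_two_pow {s t : Finset ℕ} {m r₁ r₂ : ℕ}
    (hunion : s ∪ t = Finset.range (m + 1)) (hinter : s ∩ t = {r₁, r₂}) (hlt : r₁ < r₂)
    (hr₁ : Even r₁) (hR : ∀ n, R s n = R t n) (hst : s ≠ t) :
    r₂ = r₁ + 1 ∧ m = r₁ + r₂ ∧ ∃ k, r₁ + 2 = 2 ^ k := by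
  have hle {i : ℕ} (hi : i ∈ s ∪ t) : i ≤ m := by simpa [hunion, Nat.lt_succ_iff] using hi
  have hr₂ : r₂ ≤ m := hle (Finset.inter_subset_union (by simp [hinter]))
  set E := genPoly ℂ s - genPoly ℂ t
  have hE : E ≠ 0 := sub_ne_zero.2 ((genPoly_injective ℂ).ne hst)
  have hES : E * coverPoly ℂ m r₁ r₂ = expand ℂ 2 E := by
    rw [← genPoly_add_genPoly_eq_coverPoly ℂ hunion hinter hlt.ne, genPoly_sub_mul_genPoly_add ℂ hR]
  have hpow : m + 3 = 2 ^ rootMultiplicity 1 E := by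
    have heval := eval_eq_pow_rootMultiplicity_of_mul_eq_expand hE hES (one_pow 2)
    rw [eval_one_coverPoly, one_add_one_eq_two] at heval
    exact_mod_cast heval
  obtain ⟨k, hk⟩ : ∃ k, rootMultiplicity 1 E = k + 1 :=
    Nat.exists_eq_succ_of_ne_zero fun h0 ↦ by simp [h0] at hpow
  rw [hk] at hpow
  have hdeg : E.natDegree ≤ m := (natDegree_sub_le _ _).trans <| max_le
    (natDegree_genPoly_le ℂ fun i hi ↦ hle (Finset.mem_union_left t hi))
    (natDegree_genPoly_le ℂ fun i hi ↦ hle (Finset.mem_union_right s hi))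
  obtain ⟨z, hz, hmult⟩ := exists_one_lt_rootMultiplicity hE hES hk (by lia)
    (Complex.isPrimitiveRoot_exp _ (by positivity))
    fun z hz ↦ not_isRoot_coverPoly_of_isPrimitiveRoot (hpow ▸ hz) (by lia)
  obtain ⟨hr, hm⟩ := eq_add_one_and_eq_add_of_one_lt_rootMultiplicity hpow hr₁ hlt hr₂
    (hpow ▸ hz) hmult
  exact ⟨hr, hm, k, by lia⟩

lemma genPoly_sub_eq_mul_prod (K : Type*) [CommRing K] [IsDomain K] {s t : Finset ℕ} {r k : ℕ}
    (hr : r + 2 = 2 ^ k) (hr0 : 0 < r)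
    (hunion : s ∪ t = Finset.range (r + (r + 1) + 1)) (hinter : s ∩ t = {r, r + 1}) (h0 : 0 ∈ s)
    (hR : ∀ n, R s n = R t n) :
    genPoly K s - genPoly K t = (1 - X ^ r) * ∏ j ∈ Finset.range k, (1 - X ^ 2 ^ j) := by
  have h0t : 0 ∉ t := fun h ↦ by
    have : 0 ∈ s ∩ t := Finset.mem_inter.2 ⟨h0, h⟩
    simp [hinter, hr0.ne] at this
  have hcover := genPoly_add_genPoly_eq_coverPoly K hunion hinter r.lt_succ_self.ne
  refine eq_of_mul_eq_expand (S := coverPoly K (r + (r + 1)) r (r + 1)) ?_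
    (one_sub_X_pow_mul_prod_mul_coverPoly hr) ?_ ?_
  · rw [← hcover, genPoly_sub_mul_genPoly_add K hR]
  · simp [← hcover, coeff_genPoly, h0, h0t]
  · rw [prod_one_sub_X_pow_two_pow]
    simp [coeff_genPoly, h0, h0t, mul_coeff_zero, mem_evilFinset, mem_odiousFinset, zero_mem_A,
      hr0.ne]

lemma mem_A_of_genPoly_sub_eq_mul_prod {K : Type*} [CommRing K] [CharZero K] {s t : Finset ℕ}
    {r k : ℕ} (hr : r < 2 ^ k) (hinter : r ∈ s ∩ t)
    (hsub : genPoly K s - genPoly K t =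
      (1 - X ^ r) * ∏ j ∈ Finset.range k, (1 - X ^ 2 ^ j)) : r ∈ A := by
  rw [Finset.mem_inter] at hinter
  by_contra hA
  rw [prod_one_sub_X_pow_two_pow, sub_mul, one_mul] at hsub
  have hcoeff : (0 : K) = -1 - 1 := by
    simpa [coeff_genPoly, coeff_X_pow_mul', mem_evilFinset, mem_odiousFinset, zero_mem_A, hinter,
      hA, hr] using congrArg (coeff · r) hsub
  norm_num at hcoeff

lemma exists_odd_and_eq_union_image {s t : Finset ℕ} {m r₁ r₂ : ℕ} (hm : 1 < m)
    (hunion : s ∪ t = Finset.range (m + 1)) (hinter : s ∩ t = {r₁, r₂}) (hlt : r₁ < r₂)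
    (h0 : 0 ∈ s) (hr₁ : Even r₁) (hR : ∀ n, R s n = R t n) :
    r₂ = r₁ + 1 ∧ m = r₁ + r₂ ∧ ∃ k, Odd k ∧ r₁ + 2 = 2 ^ k ∧
      s = evilFinset k ∪ (odiousFinset k).image (r₁ + ·) ∧
      t = odiousFinset k ∪ (evilFinset k).image (r₁ + ·) := by
  have hst : s ≠ t := by
    rintro rfl
    rw [Finset.union_self] at hunion
    rw [Finset.inter_self, hunion] at hinter
    have hcard := Finset.card_le_two (a := r₁) (b := r₂)
    rw [← hinter, Finset.card_range] at hcard
    lia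
  obtain ⟨rfl, rfl, k, hr⟩ :=
    eq_add_one_and_eq_add_and_add_two_eq_two_pow hunion hinter hlt hr₁ hR hst
  have hsub := genPoly_sub_eq_mul_prod ℂ hr (by lia) hunion hinter h0 hR
  have hA := mem_A_of_genPoly_sub_eq_mul_prod (by lia) (by simp [hinter]) hsub
  have hk := (mem_A_iff_odd_of_add_two_eq_two_pow hr).1 hA
  exact ⟨rfl, rfl, k, hk, hr, eq_and_eq_of_genPoly_sub_eq_of_inter_eq
    (hsub.trans (genPoly_sub_genPoly_union_image ℂ hr hk).symm)
    (hinter.trans (union_image_inter_union_image_eq_pair hr hk).symm)⟩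

end Rigidity

theorem stmt8 (m r1 r2 : ℕ) (hm : 3 ≤ m) (C D : Set ℕ)
    (h1 : C ∪ D = Set.Icc 0 m) (h2 : C ∩ D = {r1, r2}) (h3 : r1 < r2)
    (h4 : (0 : ℕ) ∈ C) (h5 : Even r1)
    (h6 : ∀ n : ℕ, R C n = R D n) :
    ∃ l : ℕ, 0 < l ∧ r1 = 2 ^ (2 * l + 1) - 2 ∧ r2 = 2 ^ (2 * l + 1) - 1 ∧
      m = 2 ^ (2 * l + 2) - 3 ∧
      C = Al (2 * l + 1) ∪ ((fun x => 2 ^ (2 * l + 1) - 2 + x) '' Bl (2 * l + 1)) ∧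
      D = Bl (2 * l + 1) ∪ ((fun x => 2 ^ (2 * l + 1) - 2 + x) '' Al (2 * l + 1)) := by
  lift C to Finset ℕ using (finite_Icc 0 m).subset (h1 ▸ subset_union_left)
  lift D to Finset ℕ using (finite_Icc 0 m).subset (h1 ▸ subset_union_right)
  have hunion : C ∪ D = Finset.range (m + 1) := by
    rw [Nat.range_succ_eq_Icc_zero, ← Finset.coe_inj, Finset.coe_union, Finset.coe_Icc, h1]
  have hinter : C ∩ D = {r1, r2} := by exact_mod_cast h2
  obtain ⟨rfl, rfl, _, ⟨l, rfl⟩, hr, rfl, rfl⟩ :=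
    exists_odd_and_eq_union_image (by lia) hunion hinter h3 (by exact_mod_cast h4) h5 h6
  obtain rfl : r1 = 2 ^ (2 * l + 1) - 2 := by lia
  refine ⟨l, ?_, rfl, by lia, by lia, ?_, ?_⟩
  · rw [Nat.pos_iff_ne_zero]
    rintro rfl
    simp at hm
  · rw [Finset.coe_union, Finset.coe_image, coe_evilFinset, coe_odiousFinset]
  · rw [Finset.coe_union, Finset.coe_image, coe_evilFinset, coe_odiousFinset]
end

section
/- Let m ≥ 3, and let C, D ⊆ ℕ satisfy C ∪ D = [0, m], C ∩ D = {r_1, r_2} with r_1 < r_2, 0 ∈ C, and r_1 odd. Then R_C(n) = R_D(n) for every nonnegative integer n if and only if there exists a positive integer l such that r_1 = 2^{2l} − 1, r_2 = 2^{2l+1} + 2^{2l} − 2, m = 2^{2l+2} − 3, C = A_{2l} ∪ (2^{2l} − 1 + B_{2l}) ∪ (2^{2l+1} − 1 + (B_{2l} ∪ (2^{2l} − 1 + A_{2l}))), and D = B_{2l} ∪ (2^{2l} − 1 + A_{2l}) ∪ (2^{2l+1} − 1 + (A_{2l} ∪ (2^{2l} − 1 + B_{2l}))). -/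
open Set

/-!
Write `F = C(x) - D(x)` and `S = C(x) + D(x)` for the generating polynomials of `C` and `D`. The
representation functions agree iff `F(x) S(x) = F(x²)`, and `C ∪ D = [0, m]`, `C ∩ D = {r₁, r₂}`
say that `S = 1 + x + ⋯ + x ^ m + x ^ r₁ + x ^ r₂`. Three consequences of the functional equation
pin down the solution.

* Cancelling the zero of `F` at `1` shows that `S(1) = m + 3` is a power of `2`.
* If `S(z) = 0`, then the roots of `F` contain `z²` and are closed under squaring, so `|z| = 1`.
  Hence `S` is palindromic, and `r₁ + r₂ = m`.
* Multiplied by `1 - x`, the equation becomes a recurrence for the coefficients of `F`. Below `r₁`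
  they follow the Thue–Morse sequence; comparing the coefficients up to `r₂` with the values `±1`
  that they must take forces `r₁ + 1 = 4 ^ l` and `m + 3 = 4 ^ (l + 1)`.

Since `S` and the value `F(0) = 1` determine `F`, it remains to exhibit one solution for every `l`.
If `R_C = R_D`, then `C ∪ (r + D)` and `D ∪ (r + C)` also have equal representation functions when
the unions are disjoint; start from `({0}, ∅)` and use `r = 1, 2, 4, …, 2 ^ (2 * l - 1)`, then
`r = 2 ^ (2 * l) - 1` and `r = 2 ^ (2 * l + 1) - 1`.
-/

/-! ### Generating polynomials -/

section

open Polynomial Finset.HasAntidiagonal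

/-- The generating polynomial `∑ i ∈ s, X ^ i` of a finite set `s` of natural numbers; it is the
junk value `0` when `s` is infinite. -/
noncomputable def indicatorPoly (s : Set ℕ) : ℤ[X] := ∑ᶠ i ∈ s, X ^ i

variable {s t C D C' D' : Set ℕ}

lemma coeff_indicatorPoly (hs : s.Finite) (n : ℕ) :
    (indicatorPoly s).coeff n = s.indicator 1 n := by
  classical
  simp [indicatorPoly, finsum_mem_eq_finite_toFinset_sum _ hs, coeff_X_pow, Set.indicator_apply]

lemma indicatorPoly_injOn : {s : Set ℕ | s.Finite}.InjOn indicatorPoly := by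
  intro s hs t ht h
  refine Set.indicator_one_inj ℤ (funext fun n => ?_)
  have hn := congrArg (coeff · n) h
  simpa only [coeff_indicatorPoly hs, coeff_indicatorPoly ht] using hn

lemma indicatorPoly_union (hs : s.Finite) (ht : t.Finite) (hst : Disjoint s t) :
    indicatorPoly (s ∪ t) = indicatorPoly s + indicatorPoly t :=
  finsum_mem_union hst hs ht

lemma indicatorPoly_image_add_left (r : ℕ) (s : Set ℕ) :
    indicatorPoly ((fun x => r + x) '' s) = X ^ r * indicatorPoly s := by
  rw [indicatorPoly, finsum_mem_image (add_right_injective r).injOn, indicatorPoly,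
    mul_finsum_mem]
  simp only [pow_add]

lemma sum_antidiagonal_of_symm {M : Type*} [AddCommMonoid M] (f : ℕ → ℕ → M)
    (hf : ∀ i j, f i j = f j i) (n : ℕ) :
    ∑ p ∈ antidiagonal n, f p.1 p.2 =
      2 • ∑ p ∈ antidiagonal n with p.1 < p.2, f p.1 p.2 +
        if 2 ∣ n then f (n / 2) (n / 2) else 0 := by
  have above : ∑ p ∈ antidiagonal n with p.2 < p.1, f p.1 p.2 =
      ∑ p ∈ antidiagonal n with p.1 < p.2, f p.1 p.2 := by
    simp only [Finset.sum_filter]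
    rw [← Finset.Nat.sum_antidiagonal_swap]
    simp only [Prod.fst_swap, Prod.snd_swap, hf]
  have diagonal : ∑ p ∈ antidiagonal n with p.1 = p.2, f p.1 p.2 =
      if 2 ∣ n then f (n / 2) (n / 2) else 0 := by
    have : (antidiagonal n).filter (fun p => p.1 = p.2) =
        if 2 ∣ n then {(n / 2, n / 2)} else ∅ := by
      ext ⟨i, j⟩
      split_ifs <;>
        simp only [Finset.mem_filter, Finset.HasAntidiagonal.mem_antidiagonal, Finset.mem_singleton,
          Prod.mk.injEq, Finset.notMem_empty] <;> lia
    rw [this]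
    split_ifs <;> simp
  have split : ∑ p ∈ antidiagonal n, f p.1 p.2 =
      ∑ p ∈ antidiagonal n with p.1 < p.2, f p.1 p.2 +
        ∑ p ∈ antidiagonal n with p.2 < p.1, f p.1 p.2 +
          ∑ p ∈ antidiagonal n with p.1 = p.2, f p.1 p.2 := by
    simp only [Finset.sum_filter, ← Finset.sum_add_distrib]
    refine Finset.sum_congr rfl fun p _ => ?_
    rcases lt_trichotomy p.1 p.2 with h | h | h
    · simp [h, h.not_gt, h.ne]
    · simp [h]
    · simp [h, h.not_gt, h.ne']
  rw [split, above, diagonal, two_nsmul]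

lemma natCast_R (s : Set ℕ) (n : ℕ) :
    (R s n : ℤ) = ∑ p ∈ antidiagonal n with p.1 < p.2,
      s.indicator 1 p.1 * s.indicator 1 p.2 := by
  classical
  have : {p : ℕ × ℕ | p.1 ∈ s ∧ p.2 ∈ s ∧ p.1 < p.2 ∧ p.1 + p.2 = n} =
      (antidiagonal n).filter fun p => p.1 < p.2 ∧ p.1 ∈ s ∧ p.2 ∈ s := by
    ext p
    simp only [Finset.coe_filter, Finset.HasAntidiagonal.mem_antidiagonal, Set.mem_ofPred_eq]
    tauto
  rw [R, this, Set.ncard_coe_finset, ← Finset.filter_filter, Finset.card_filter]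
  push_cast
  exact Finset.sum_congr rfl fun p _ => by
    by_cases h1 : p.1 ∈ s <;> by_cases h2 : p.2 ∈ s <;> simp [h1, h2]

lemma coeff_indicatorPoly_sq (hs : s.Finite) (n : ℕ) :
    (indicatorPoly s ^ 2).coeff n = 2 * R s n + (expand ℤ 2 (indicatorPoly s)).coeff n := by
  have idem (k : ℕ) : s.indicator (1 : ℕ → ℤ) k * s.indicator 1 k = s.indicator 1 k := by
    by_cases hk : k ∈ s <;> simp [hk]
  rw [sq, coeff_mul, natCast_R, coeff_expand two_pos]
  simp only [coeff_indicatorPoly hs]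
  rw [sum_antidiagonal_of_symm (fun i j => s.indicator (1 : ℕ → ℤ) i * s.indicator 1 j)
    fun i j => mul_comm _ _, idem, nsmul_eq_mul, Nat.cast_ofNat]

/-- `C(x)² - D(x)²` and `C(x²) - D(x²)` differ by `2 ∑ (R_C(n) - R_D(n)) xⁿ`. -/
lemma R_eq_iff_mul_eq_expand (hC : C.Finite) (hD : D.Finite) :
    (∀ n, R C n = R D n) ↔
      (indicatorPoly C - indicatorPoly D) * (indicatorPoly C + indicatorPoly D) =
        expand ℤ 2 (indicatorPoly C - indicatorPoly D) := by
  rw [show (indicatorPoly C - indicatorPoly D) * (indicatorPoly C + indicatorPoly D) =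
    indicatorPoly C ^ 2 - indicatorPoly D ^ 2 by ring, Polynomial.ext_iff]
  refine forall_congr' fun n => ?_
  rw [map_sub, coeff_sub, coeff_sub, coeff_indicatorPoly_sq hC, coeff_indicatorPoly_sq hD]
  omega

lemma eq_zero_of_mul_eq_expand {K : Type*} [CommSemiring K] [NoZeroDivisors K] {p : ℕ}
    (hp : 1 < p) {F S : K[X]} (h : F * S = expand K p F) (hS : S.coeff 0 ≠ 0)
    (hF : F.coeff 0 = 0) : F = 0 := by
  by_contra hne
  set d := F.natTrailingDegree
  have hFd : F.coeff d ≠ 0 := by simpa [d] using hne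
  have hd0 : 0 < d := Nat.pos_of_ne_zero fun h0 => hFd (h0 ▸ hF)
  have hSd : S.natTrailingDegree = 0 := natTrailingDegree_eq_zero.mpr (Or.inr hS)
  have lhs : (F * S).coeff d = F.coeff d * S.coeff 0 := by
    have := coeff_mul_natTrailingDegree_add_natTrailingDegree (p := F) (q := S)
    rwa [hSd, add_zero, trailingCoeff, trailingCoeff, hSd] at this
  have rhs : (expand K p F).coeff d = 0 := by
    rw [coeff_expand (by omega)]
    split_ifs
    · exact coeff_eq_zero_of_lt_natTrailingDegree (Nat.div_lt_self hd0 hp)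
    · rfl
  exact mul_ne_zero hFd hS (by rw [← lhs, h, rhs])

lemma eq_of_indicatorPoly_add_eq (hC : C.Finite) (hD : D.Finite) (hC' : C'.Finite)
    (hD' : D'.Finite) (hR : ∀ n, R C n = R D n) (hR' : ∀ n, R C' n = R D' n)
    (hadd : indicatorPoly C + indicatorPoly D = indicatorPoly C' + indicatorPoly D')
    (h0C : 0 ∈ C) (h0D : 0 ∉ D) (h0C' : 0 ∈ C') (h0D' : 0 ∉ D') : C = C' ∧ D = D' := by
  rw [R_eq_iff_mul_eq_expand hC hD] at hR
  rw [R_eq_iff_mul_eq_expand hC' hD', ← hadd] at hR'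
  have hsub : indicatorPoly C - indicatorPoly D = indicatorPoly C' - indicatorPoly D' := by
    rw [← sub_eq_zero]
    apply eq_zero_of_mul_eq_expand one_lt_two (S := indicatorPoly C + indicatorPoly D)
    · rw [sub_mul, hR, hR', ← map_sub]
    · simp [coeff_indicatorPoly, *]
    · simp [coeff_indicatorPoly, *]
  have hCC : (2 : ℤ[X]) * indicatorPoly C = 2 * indicatorPoly C' := by
    linear_combination hadd + hsub
  have hDD : (2 : ℤ[X]) * indicatorPoly D = 2 * indicatorPoly D' := by
    linear_combination hadd - hsub
  exact ⟨indicatorPoly_injOn hC hC' (mul_left_cancel₀ two_ne_zero hCC),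
    indicatorPoly_injOn hD hD' (mul_left_cancel₀ two_ne_zero hDD)⟩

end

/-! ### The functional equation `F(x) S(x) = F(x ^ p)` -/

section

open Polynomial

/-- Cancelling `(X - 1) ^ a` from `F` turns the functional equation at `1` into
`S(1) = ((X ^ p - 1) / (X - 1))(1) ^ a`. -/
lemma exists_eval_one_eq_pow_of_mul_eq_expand {K : Type*} [CommRing K] [IsDomain K] {p : ℕ}
    {F S : K[X]} (hF : F ≠ 0) (h : F * S = expand K p F) : ∃ a : ℕ, S.eval 1 = (p : K) ^ a := by
  obtain ⟨G, hG, hdvd⟩ := exists_eq_pow_rootMultiplicity_mul_and_not_dvd F hF 1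
  set a := rootMultiplicity 1 F
  have hG1 : G.eval 1 ≠ 0 := fun h0 => hdvd (dvd_iff_isRoot.mpr h0)
  have hexpand : expand K p (X - C 1) = (X - C 1) * ∑ i ∈ Finset.range p, X ^ i := by
    simp [mul_geom_sum]
  have hcancel : G * S = (∑ i ∈ Finset.range p, X ^ i) ^ a * expand K p G := by
    refine mul_left_cancel₀ (pow_ne_zero a (X_sub_C_ne_zero (1 : K))) ?_
    rw [← mul_assoc, ← hG, h, hG, map_mul, map_pow, hexpand, mul_pow, mul_assoc]
  have heval := congrArg (eval 1) hcancel
  simp only [eval_mul, eval_pow, eval_geom_sum, expand_eval, one_pow, Finset.sum_const,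
    Finset.card_range, nsmul_eq_mul, mul_one] at heval
  exact ⟨a, mul_left_cancel₀ hG1 (heval.trans (mul_comm _ _))⟩

lemma norm_eq_one_of_finite_of_pow_mem {K : Type*} [NormedDivisionRing K] {s : Set K}
    (hs : s.Finite) {p : ℕ} (hp : 1 < p) (hpow : ∀ w ∈ s, w ^ p ∈ s) {z : K} (hz : z ∈ s)
    (hz0 : z ≠ 0) : ‖z‖ = 1 := by
  have hiter (k : ℕ) : z ^ p ^ k ∈ s := by
    induction k with
    | zero => simpa using hz
    | succ k ih => simpa only [pow_succ, pow_mul] using hpow _ ih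
  by_contra hne
  have hinj : Function.Injective fun k : ℕ => z ^ p ^ k := fun i j hij =>
    Nat.pow_right_injective hp <| pow_right_injective₀ (norm_pos_iff.mpr hz0) hne <| by
      simpa only [norm_pow] using congrArg norm hij
  exact Set.infinite_of_injective_forall_mem hinj hiter hs

lemma norm_eq_one_of_mul_eq_expand {K : Type*} [NormedField K] {p : ℕ} (hp : 1 < p)
    {F S : K[X]} (h : F * S = expand K p F) (hF : F.coeff 0 ≠ 0) {z : K} (hz : S.IsRoot z) :
    ‖z‖ = 1 := by
  have hF0 : F ≠ 0 := by rintro rfl; simp at hF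
  have hpow {w : K} (hw : F.eval w * S.eval w = 0) : F.eval (w ^ p) = 0 := by
    rw [← expand_eval, ← h, eval_mul, hw]
  have hzp : F.eval (z ^ p) = 0 := hpow (by rw [hz.eq_zero, mul_zero])
  have hzp0 : z ^ p ≠ 0 := fun h0 => hF (by rwa [h0, ← coeff_zero_eq_eval_zero] at hzp)
  have hnorm : ‖z ^ p‖ = 1 :=
    norm_eq_one_of_finite_of_pow_mem (finite_setOfPred_isRoot hF0) hp
      (fun w hw => hpow (by rw [IsRoot.eq_zero hw, zero_mul])) hzp hzp0
  rw [norm_pow] at hnorm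
  exact (pow_eq_one_iff_of_nonneg (norm_nonneg z) (by omega)).mp hnorm

lemma reverse_multiset_prod_X_sub_C {K : Type*} [Field K] {s : Multiset K} (hs : 0 ∉ s) :
    (s.map (X - C ·)).prod.reverse =
      C (s.map (- ·)).prod * (s.map (X - C ·⁻¹)).prod := by
  induction s using Multiset.induction_on with
  | empty => simpa using reverse_C (1 : K)
  | cons a s ih =>
    rw [Multiset.mem_cons, not_or] at hs
    have hreverse : (X - C a : K[X]).reverse = C (-a) * (X - C a⁻¹) := by
      rw [sub_eq_add_neg, ← C_neg, reverse_add_C]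
      simp only [reverse, natDegree_X, reflect_one_X, mul_sub, C_neg, neg_mul, ← C_mul,
        mul_inv_cancel₀ (Ne.symm hs.1), C_1, pow_one]
      ring
    simp only [Multiset.map_cons, Multiset.prod_cons, reverse_mul_of_domain, ih hs.2, hreverse,
      map_mul]
    ring

lemma exists_reverse_eq_C_mul_map_conj {Q : ℂ[X]} (hroot : ∀ z, Q.IsRoot z → ‖z‖ = 1) :
    ∃ c, Q.reverse = C c * Q.map (starRingEnd ℂ) := by
  rcases eq_or_ne Q 0 with rfl | hQ
  · simp
  have hnorm (z : ℂ) (hz : z ∈ Q.roots) : ‖z‖ = 1 := hroot z (isRoot_of_mem_roots hz)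
  have hprod : Q = C Q.leadingCoeff * (Q.roots.map (X - C ·)).prod :=
    (IsAlgClosed.splits Q).eq_prod_roots
  have hzero : 0 ∉ Q.roots := fun h0 => by simpa using hnorm 0 h0
  have hconj : Q.map (starRingEnd ℂ) =
      C (starRingEnd ℂ Q.leadingCoeff) * (Q.roots.map (X - C ·⁻¹)).prod := by
    conv_lhs => rw [hprod]
    rw [Polynomial.map_mul, map_C, Polynomial.map_multiset_prod, Multiset.map_map]
    congr 2
    refine Multiset.map_congr rfl fun z hz => ?_
    simp [Complex.inv_eq_conj (hnorm z hz)]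
  have hlead : starRingEnd ℂ Q.leadingCoeff ≠ 0 := by simpa using hQ
  refine ⟨Q.leadingCoeff * (Q.roots.map (- ·)).prod * (starRingEnd ℂ Q.leadingCoeff)⁻¹, ?_⟩
  rw [hconj, ← mul_assoc, ← C_mul, inv_mul_cancel_right₀ hlead]
  conv_lhs => rw [hprod]
  rw [reverse_mul_of_domain, reverse_C, reverse_multiset_prod_X_sub_C hzero, C_mul, mul_assoc]

lemma reverse_eq_self_of_norm_eq_one {P : ℝ[X]} (h0 : 0 < P.coeff 0) (hlead : 0 < P.leadingCoeff)
    (hroot : ∀ z : ℂ, aeval z P = 0 → ‖z‖ = 1) : P.reverse = P := by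
  set Q := P.map Complex.ofRealHom with hQ
  have hQroot (z : ℂ) (hz : Q.IsRoot z) : ‖z‖ = 1 := hroot z (by
    rwa [IsRoot, hQ, eval_map] at hz)
  obtain ⟨c, hc⟩ := exists_reverse_eq_C_mul_map_conj hQroot
  have hcoeff (n : ℕ) : (P.reverse.coeff n : ℂ) = c * P.coeff n := by
    have := congrArg (coeff · n) hc
    simpa [hQ, coeff_reverse, natDegree_map_eq_of_injective Complex.ofRealHom.injective] using this
  have hP : P.leadingCoeff = c * P.coeff 0 := by simpa using hcoeff 0
  have hP' : P.coeff 0 = c * P.leadingCoeff := by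
    simpa [coeff_reverse, revAt_le le_rfl] using hcoeff P.natDegree
  have hsq : P.leadingCoeff ^ 2 = P.coeff 0 ^ 2 := by
    exact_mod_cast show (P.leadingCoeff : ℂ) ^ 2 = P.coeff 0 ^ 2 by
      linear_combination P.leadingCoeff * hP - P.coeff 0 * hP'
  have heq : P.leadingCoeff = P.coeff 0 := (sq_eq_sq₀ hlead.le h0.le).mp hsq
  have hc1 : c = 1 := by
    rw [heq] at hP
    exact (eq_div_of_mul_eq (by exact_mod_cast h0.ne') hP.symm).trans
      (div_self (by exact_mod_cast h0.ne'))
  ext n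
  simpa [hc1] using hcoeff n

lemma reverse_eq_self_of_mul_eq_expand {F S : ℤ[X]} {p : ℕ} (hp : 1 < p)
    (h : F * S = expand ℤ p F) (hF : F.coeff 0 ≠ 0) (h0 : 0 < S.coeff 0)
    (hlead : 0 < S.leadingCoeff) : S.reverse = S := by
  have hinj : Function.Injective (Int.castRingHom ℝ) := Int.cast_injective
  have hroot (z : ℂ) (hz : aeval z (S.map (Int.castRingHom ℝ)) = 0) : ‖z‖ = 1 := by
    have hmap : F.map (Int.castRingHom ℂ) * S.map (Int.castRingHom ℂ) =
        expand ℂ p (F.map (Int.castRingHom ℂ)) := by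
      rw [← Polynomial.map_mul, h, map_expand]
    refine norm_eq_one_of_mul_eq_expand hp hmap (by simpa using hF) ?_
    rwa [aeval_def, eval₂_map, RingHom.eq_intCast' ((algebraMap ℝ ℂ).comp _), ← eval_map] at hz
  have hreal : (S.map (Int.castRingHom ℝ)).reverse = S.map (Int.castRingHom ℝ) :=
    reverse_eq_self_of_norm_eq_one (by simpa using h0)
      (by simpa [leadingCoeff_map_of_injective hinj] using hlead) hroot
  refine map_injective _ hinj ?_
  rwa [reverse, natDegree_map_eq_of_injective hinj, reflect_map] at hreal

end

/-! ### Thue–Morse sets -/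

section

open Polynomial

/-- The set `S ∪ (r + T)`. When the unions are disjoint, `(S, T) ↦ (S ∪ (r + T), T ∪ (r + S))`
multiplies `∑ s ∈ S, x ^ s - ∑ t ∈ T, x ^ t` by `1 - x ^ r` and the sum of the two series by
`1 + x ^ r`. -/
def shiftUnion (r : ℕ) (S T : Set ℕ) : Set ℕ := S ∪ (fun x => r + x) '' T

variable {r : ℕ} {S T : Set ℕ}

lemma finite_shiftUnion (hS : S.Finite) (hT : T.Finite) : (shiftUnion r S T).Finite :=
  hS.union (hT.image _)

lemma mem_shiftUnion {n : ℕ} : n ∈ shiftUnion r S T ↔ n ∈ S ∨ r ≤ n ∧ n - r ∈ T := by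
  refine or_congr_right ⟨?_, fun ⟨hn, hT⟩ => ⟨n - r, hT, Nat.add_sub_cancel' hn⟩⟩
  rintro ⟨x, hx, rfl⟩
  exact ⟨Nat.le_add_right r x, by rwa [Nat.add_sub_cancel_left]⟩

lemma indicatorPoly_shiftUnion (hS : S.Finite) (hT : T.Finite)
    (hST : Disjoint S ((fun x => r + x) '' T)) :
    indicatorPoly (shiftUnion r S T) = indicatorPoly S + X ^ r * indicatorPoly T := by
  rw [shiftUnion, indicatorPoly_union hS (hT.image _) hST, indicatorPoly_image_add_left]

lemma shiftUnion_subset_Icc {n : ℕ} (hS : S ⊆ Set.Icc 0 n) (hT : T ⊆ Set.Icc 0 n) :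
    shiftUnion r S T ⊆ Set.Icc 0 (r + n) := by
  rintro _ (hx | ⟨x, hx, rfl⟩)
  · exact ⟨Nat.zero_le _, (hS hx).2.trans (Nat.le_add_left n r)⟩
  · exact ⟨Nat.zero_le _, Nat.add_le_add_left (hT hx).2 r⟩

lemma disjoint_image_of_subset_Icc {n : ℕ} (hS : S ⊆ Set.Icc 0 n) (hn : n < r) :
    Disjoint S ((fun x => r + x) '' T) := by
  rw [Set.disjoint_left]
  rintro _ hx ⟨y, -, rfl⟩
  exact ((hn.trans_le (Nat.le_add_right r y)).trans_le (hS hx).2).false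

lemma R_shiftUnion (hS : S.Finite) (hT : T.Finite) (hST : Disjoint S ((fun x => r + x) '' T))
    (hTS : Disjoint T ((fun x => r + x) '' S)) (hR : ∀ n, R S n = R T n) (n : ℕ) :
    R (shiftUnion r S T) n = R (shiftUnion r T S) n := by
  rw [R_eq_iff_mul_eq_expand hS hT, map_sub] at hR
  revert n
  rw [R_eq_iff_mul_eq_expand (finite_shiftUnion hS hT) (finite_shiftUnion hT hS),
    indicatorPoly_shiftUnion hS hT hST, indicatorPoly_shiftUnion hT hS hTS]
  simp only [map_sub, map_add, map_mul, map_pow, expand_X]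
  linear_combination (1 - X ^ (2 * r)) * hR

end

/-- The Thue–Morse sequence in its `±1` form: `1` on the evil numbers `A`, `-1` on the odious
numbers `B`. -/
def thueMorse (n : ℕ) : ℤ := (-1) ^ (Nat.digits 2 n).count 1

lemma thueMorse_zero : thueMorse 0 = 1 := by simp [thueMorse]

lemma thueMorse_two_mul (n : ℕ) : thueMorse (2 * n) = thueMorse n := by
  rcases n.eq_zero_or_pos with rfl | hn
  · rfl
  · simp [thueMorse, Nat.digits_base_mul one_lt_two hn]

lemma thueMorse_two_mul_add_one (n : ℕ) : thueMorse (2 * n + 1) = -thueMorse n := by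
  rw [thueMorse, add_comm, Nat.digits_add 2 one_lt_two 1 n one_lt_two (Or.inl one_ne_zero),
    List.count_cons_self, pow_succ, mul_neg_one, thueMorse]

lemma thueMorse_eq_one_or_neg_one (n : ℕ) : thueMorse n = 1 ∨ thueMorse n = -1 :=
  neg_one_pow_eq_or ℤ _

lemma thueMorse_eq_mul_div_two (n : ℕ) : thueMorse n = (-1) ^ n * thueMorse (n / 2) := by
  obtain ⟨k, rfl | rfl⟩ := n.even_or_odd'
  · simp [thueMorse_two_mul]
  · simp [thueMorse_two_mul_add_one, pow_succ, show (2 * k + 1) / 2 = k by omega]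

lemma thueMorse_one : thueMorse 1 = -1 := by
  rw [← zero_add 1, ← mul_zero 2, thueMorse_two_mul_add_one, thueMorse_zero]

lemma thueMorse_two_pow_mul_add {k v : ℕ} (u : ℕ) (hv : v < 2 ^ k) :
    thueMorse (2 ^ k * u + v) = thueMorse u * thueMorse v := by
  induction k generalizing v with
  | zero => simp [Nat.lt_one_iff.mp hv, thueMorse_zero]
  | succ k ih =>
    rw [pow_succ] at hv
    obtain ⟨w, rfl | rfl⟩ := v.even_or_odd'
    · rw [show 2 ^ (k + 1) * u + 2 * w = 2 * (2 ^ k * u + w) by ring, thueMorse_two_mul,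
        thueMorse_two_mul, ih (by omega)]
    · rw [show 2 ^ (k + 1) * u + (2 * w + 1) = 2 * (2 ^ k * u + w) + 1 by ring,
        thueMorse_two_mul_add_one, thueMorse_two_mul_add_one, ih (by omega), mul_neg]

lemma thueMorse_two_pow_add {k v : ℕ} (hv : v < 2 ^ k) :
    thueMorse (2 ^ k + v) = -thueMorse v := by
  simpa [thueMorse_one] using thueMorse_two_pow_mul_add 1 hv

lemma thueMorse_two_pow (k : ℕ) : thueMorse (2 ^ k) = -1 := by
  simpa [thueMorse_zero] using thueMorse_two_pow_add (v := 0) (Nat.two_pow_pos k)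

/-- Complementing the `k` low bits changes the parity of the digit sum by `k`. -/
lemma thueMorse_two_pow_sub {k v : ℕ} (hv : v < 2 ^ k) :
    thueMorse (2 ^ k - 1 - v) = (-1) ^ k * thueMorse v := by
  induction k generalizing v with
  | zero => simp [Nat.lt_one_iff.mp hv, thueMorse_zero]
  | succ k ih =>
    rw [pow_succ] at hv
    obtain ⟨w, rfl | rfl⟩ := v.even_or_odd'
    · rw [show 2 ^ (k + 1) - 1 - 2 * w = 2 * (2 ^ k - 1 - w) + 1 by omega, thueMorse_two_mul,
        thueMorse_two_mul_add_one, ih (by omega)]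
      ring
    · rw [show 2 ^ (k + 1) - 1 - (2 * w + 1) = 2 * (2 ^ k - 1 - w) by omega, thueMorse_two_mul,
        thueMorse_two_mul_add_one, ih (by omega)]
      ring

lemma thueMorse_two_pow_sub_one (k : ℕ) : thueMorse (2 ^ k - 1) = (-1) ^ k := by
  simpa [thueMorse_zero] using thueMorse_two_pow_sub (v := 0) (Nat.two_pow_pos k)

lemma mem_Al {k n : ℕ} : n ∈ Al k ↔ n < 2 ^ k ∧ thueMorse n = 1 := by
  have := Nat.two_pow_pos k
  rw [Al, Set.mem_inter_iff, Set.mem_Icc, A, Set.mem_ofPred_eq, thueMorse,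
    neg_one_pow_eq_one_iff_even (by norm_num)]
  lia

lemma mem_Bl {k n : ℕ} : n ∈ Bl k ↔ n < 2 ^ k ∧ thueMorse n = -1 := by
  have := Nat.two_pow_pos k
  rw [Bl, Set.mem_inter_iff, Set.mem_Icc, B, A, Set.mem_compl_iff, Set.mem_ofPred_eq, thueMorse,
    neg_one_pow_eq_neg_one_iff_odd (by norm_num), ← Nat.not_even_iff_odd]
  lia

lemma finite_Al (k : ℕ) : (Al k).Finite := (Set.finite_Icc _ _).inter_of_right _

lemma finite_Bl (k : ℕ) : (Bl k).Finite := (Set.finite_Icc _ _).inter_of_right _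

lemma Al_succ (k : ℕ) : Al (k + 1) = shiftUnion (2 ^ k) (Al k) (Bl k) := by
  ext n
  rw [mem_shiftUnion, mem_Al, mem_Al, mem_Bl, pow_succ]
  rcases lt_or_ge n (2 ^ k) with hn | hn
  · lia
  · obtain ⟨v, rfl⟩ := Nat.exists_eq_add_of_le hn
    have := thueMorse_two_pow_add (k := k) (v := v)
    grind

lemma Bl_succ (k : ℕ) : Bl (k + 1) = shiftUnion (2 ^ k) (Bl k) (Al k) := by
  ext n
  rw [mem_shiftUnion, mem_Bl, mem_Bl, mem_Al, pow_succ]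
  rcases lt_or_ge n (2 ^ k) with hn | hn
  · lia
  · obtain ⟨v, rfl⟩ := Nat.exists_eq_add_of_le hn
    have := thueMorse_two_pow_add (k := k) (v := v)
    grind

lemma R_Al_eq_R_Bl (k n : ℕ) : R (Al k) n = R (Bl k) n := by
  induction k generalizing n with
  | zero =>
    have hA : Al 0 = {0} := by ext; simp +contextual [mem_Al, thueMorse_zero]
    have hB : Bl 0 = ∅ := by ext; simp +contextual [mem_Bl, thueMorse_zero]
    rw [hA, hB, R, R]
    congr 1
    ext p
    simp only [Set.mem_singleton_iff, Set.mem_empty_iff_false, Set.mem_ofPred_eq]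
    lia
  | succ k ih =>
    rw [Al_succ, Bl_succ]
    have hlt : 2 ^ k - 1 < 2 ^ k := Nat.sub_lt (Nat.two_pow_pos k) one_pos
    exact R_shiftUnion (finite_Al k) (finite_Bl k)
      (disjoint_image_of_subset_Icc Set.inter_subset_right hlt)
      (disjoint_image_of_subset_Icc Set.inter_subset_right hlt) ih n

/-! ### The extremal solution -/

section

open Polynomial

/-- The polynomial `1 + X + ⋯ + X ^ m + X ^ r₁ + X ^ r₂`, which is the sum of the generating
polynomials of two sets with union `[0, m]` and intersection `{r₁, r₂}`. -/
noncomputable def doubledInterval (m r₁ r₂ : ℕ) : ℤ[X] :=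
  indicatorPoly (Set.Icc 0 m) + X ^ r₁ + X ^ r₂

lemma indicatorPoly_add_eq_doubledInterval {C D : Set ℕ} {m r₁ r₂ : ℕ}
    (hunion : C ∪ D = Set.Icc 0 m) (hinter : C ∩ D = {r₁, r₂}) (hr : r₁ ≠ r₂) :
    indicatorPoly C + indicatorPoly D = doubledInterval m r₁ r₂ := by
  have hfin : (C ∪ D).Finite := hunion ▸ Set.finite_Icc 0 m
  rw [indicatorPoly, indicatorPoly,
    ← finsum_mem_union_inter (hfin.subset Set.subset_union_left)
      (hfin.subset Set.subset_union_right),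
    hunion, hinter, finsum_mem_pair hr, ← add_assoc, doubledInterval, indicatorPoly]

lemma indicatorPoly_Icc_mul_one_sub (m : ℕ) :
    indicatorPoly (Set.Icc 0 m) * (1 - X) = 1 - X ^ (m + 1) := by
  rw [indicatorPoly, finsum_mem_eq_finite_toFinset_sum _ (Set.finite_Icc 0 m),
    ← geom_sum_mul_neg (X : ℤ[X])]
  congr 2
  ext
  simp

lemma indicatorPoly_Al_add_indicatorPoly_Bl (k : ℕ) :
    indicatorPoly (Al k) + indicatorPoly (Bl k) = indicatorPoly (Set.Icc 0 (2 ^ k - 1)) := by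
  rw [← indicatorPoly_union (finite_Al k) (finite_Bl k), Al, Bl, B, ← Set.union_inter_distrib_right,
    Set.union_compl_self, Set.univ_inter]
  exact disjoint_compl_right.mono Set.inter_subset_left Set.inter_subset_left

/-- For even `k` this is the set `C` of the extremal solution. -/
def extremalC (k : ℕ) : Set ℕ :=
  shiftUnion (2 ^ (k + 1) - 1) (shiftUnion (2 ^ k - 1) (Al k) (Bl k))
    (shiftUnion (2 ^ k - 1) (Bl k) (Al k))

/-- For even `k` this is the set `D` of the extremal solution. -/
def extremalD (k : ℕ) : Set ℕ :=
  shiftUnion (2 ^ (k + 1) - 1) (shiftUnion (2 ^ k - 1) (Bl k) (Al k))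
    (shiftUnion (2 ^ k - 1) (Al k) (Bl k))

variable {k : ℕ}

lemma disjoint_Al_image_Bl (k : ℕ) : Disjoint (Al k) ((fun x => 2 ^ k - 1 + x) '' Bl k) := by
  rw [Set.disjoint_left]
  rintro _ hx ⟨y, hy, rfl⟩
  simp only [mem_Al, mem_Bl] at hx hy
  obtain rfl : y = 0 := by omega
  simp [thueMorse_zero] at hy

lemma disjoint_Bl_image_Al (hk : Even k) :
    Disjoint (Bl k) ((fun x => 2 ^ k - 1 + x) '' Al k) := by
  rw [Set.disjoint_left]
  rintro _ hx ⟨y, hy, rfl⟩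
  simp only [mem_Al, mem_Bl] at hx hy
  obtain rfl : y = 0 := by omega
  simp [thueMorse_two_pow_sub_one, hk.neg_one_pow] at hx

lemma disjoint_shiftUnion_image {S T U : Set ℕ} (hS : S ⊆ Set.Icc 0 (2 ^ k - 1))
    (hT : T ⊆ Set.Icc 0 (2 ^ k - 1)) :
    Disjoint (shiftUnion (2 ^ k - 1) S T) ((fun x => 2 ^ (k + 1) - 1 + x) '' U) :=
  disjoint_image_of_subset_Icc (shiftUnion_subset_Icc hS hT) (by
    have := Nat.two_pow_pos k
    omega)

lemma R_extremalC_eq_R_extremalD (hk : Even k) (n : ℕ) :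
    R (extremalC k) n = R (extremalD k) n :=
  R_shiftUnion (finite_shiftUnion (finite_Al k) (finite_Bl k))
    (finite_shiftUnion (finite_Bl k) (finite_Al k))
    (disjoint_shiftUnion_image Set.inter_subset_right Set.inter_subset_right)
    (disjoint_shiftUnion_image Set.inter_subset_right Set.inter_subset_right)
    (R_shiftUnion (finite_Al k) (finite_Bl k) (disjoint_Al_image_Bl k) (disjoint_Bl_image_Al hk)
      (R_Al_eq_R_Bl k)) n

lemma finite_extremalC (k : ℕ) : (extremalC k).Finite :=
  finite_shiftUnion (finite_shiftUnion (finite_Al k) (finite_Bl k))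
    (finite_shiftUnion (finite_Bl k) (finite_Al k))

lemma finite_extremalD (k : ℕ) : (extremalD k).Finite :=
  finite_shiftUnion (finite_shiftUnion (finite_Bl k) (finite_Al k))
    (finite_shiftUnion (finite_Al k) (finite_Bl k))

lemma indicatorPoly_extremalC_add_indicatorPoly_extremalD (hk : Even k) :
    indicatorPoly (extremalC k) + indicatorPoly (extremalD k) =
      doubledInterval (2 ^ (k + 2) - 3) (2 ^ k - 1) (2 ^ (k + 1) + 2 ^ k - 2) := by
  have hfactor : indicatorPoly (extremalC k) + indicatorPoly (extremalD k) =
      indicatorPoly (Set.Icc 0 (2 ^ k - 1)) *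
        ((1 + X ^ (2 ^ k - 1)) * (1 + X ^ (2 ^ (k + 1) - 1))) := by
    have hA := finite_Al k
    have hB := finite_Bl k
    rw [← indicatorPoly_Al_add_indicatorPoly_Bl, extremalC, extremalD,
      indicatorPoly_shiftUnion (finite_shiftUnion hA hB) (finite_shiftUnion hB hA)
        (disjoint_shiftUnion_image Set.inter_subset_right Set.inter_subset_right),
      indicatorPoly_shiftUnion (finite_shiftUnion hB hA) (finite_shiftUnion hA hB)
        (disjoint_shiftUnion_image Set.inter_subset_right Set.inter_subset_right),
      indicatorPoly_shiftUnion hA hB (disjoint_Al_image_Bl k),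
      indicatorPoly_shiftUnion hB hA (disjoint_Bl_image_Al hk)]
    ring
  have hX : (1 - X : ℤ[X]) ≠ 0 := by simpa using sub_ne_zero.mpr (X_ne_C (1 : ℤ)).symm
  obtain ⟨M, hM⟩ : ∃ M, 2 ^ k = M + 1 := ⟨2 ^ k - 1, by have := Nat.two_pow_pos k; omega⟩
  refine mul_right_cancel₀ hX ?_
  rw [hfactor, mul_right_comm, doubledInterval, add_mul _ _ (1 - X : ℤ[X]),
    add_mul _ _ (1 - X : ℤ[X]), indicatorPoly_Icc_mul_one_sub, indicatorPoly_Icc_mul_one_sub,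
    show 2 ^ (k + 2) - 3 = 4 * M + 1 by lia,
    show 2 ^ (k + 1) + 2 ^ k - 2 = 3 * M + 1 by omega, show 2 ^ (k + 1) - 1 = 2 * M + 1 by omega,
    hM, Nat.add_sub_cancel]
  ring

lemma zero_mem_extremalC (k : ℕ) : 0 ∈ extremalC k :=
  Or.inl (Or.inl (mem_Al.mpr ⟨Nat.two_pow_pos k, thueMorse_zero⟩))

lemma zero_notMem_extremalD (hk : k ≠ 0) : 0 ∉ extremalD k := by
  have := Nat.one_lt_two_pow hk
  simp only [extremalD, mem_shiftUnion, mem_Al, mem_Bl, thueMorse_zero]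
  omega

end

/-! ### Determining `r₁`, `r₂` and `m` -/

section

open Polynomial

lemma coeff_doubledInterval (m r₁ r₂ n : ℕ) :
    (doubledInterval m r₁ r₂).coeff n =
      (if n ≤ m then 1 else 0) + (if n = r₁ then 1 else 0) + if n = r₂ then 1 else 0 := by
  simp [doubledInterval, coeff_indicatorPoly (Set.finite_Icc 0 m), Set.indicator_apply, coeff_X_pow]

lemma natDegree_doubledInterval {m r₁ r₂ : ℕ} (h₁ : r₁ ≤ m) (h₂ : r₂ ≤ m) :
    (doubledInterval m r₁ r₂).natDegree = m := by
  refine natDegree_eq_of_le_of_coeff_ne_zero (natDegree_le_iff_coeff_eq_zero.mpr fun n hn => ?_) ?_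
  · rw [coeff_doubledInterval, if_neg (by omega), if_neg (by omega), if_neg (by omega)]
    rfl
  · rw [coeff_doubledInterval, if_pos le_rfl]
    positivity

lemma eval_one_doubledInterval (m r₁ r₂ : ℕ) : (doubledInterval m r₁ r₂).eval 1 = m + 3 := by
  rw [doubledInterval, indicatorPoly, finsum_mem_eq_finite_toFinset_sum _ (Set.finite_Icc 0 m)]
  simp [eval_finsetSum]
  ring

lemma coeff_one_sub_X_mul_expand_two {K : Type*} [CommRing K] (F : K[X]) (n : ℕ) :
    ((1 - X) * expand K 2 F).coeff n = (-1) ^ n * F.coeff (n / 2) := by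
  rw [sub_mul, one_mul, coeff_sub, coeff_expand two_pos]
  rcases n with _ | n
  · simp
  · rw [coeff_X_mul, coeff_expand two_pos]
    obtain ⟨k, rfl | rfl⟩ := n.even_or_odd'
    · simp [pow_succ, show ¬ 2 ∣ 2 * k + 1 by omega, show (2 * k + 1) / 2 = k by omega]
    · simp [pow_succ, show 2 ∣ 2 * k + 1 + 1 by omega, show ¬ 2 ∣ 2 * k + 1 by omega]

lemma zero_notMem_of_inter_eq_pair {C D : Set ℕ} {r₁ r₂ : ℕ} (hinter : C ∩ D = {r₁, r₂})
    (hlt : r₁ < r₂) (h0 : 0 ∈ C) (hpos : 0 < r₁) : 0 ∉ D := fun h0D => by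
  have : 0 = r₁ ∨ 0 = r₂ := (Set.ext_iff.mp hinter 0).mp ⟨h0, h0D⟩
  omega

/-- The properties of `F = ∑ i ∈ C, X ^ i - ∑ i ∈ D, X ^ i` used to determine `r₁`, `r₂` and `m`,
where `C` and `D` have equal representation functions, `C ∪ D = [0, m]`, `C ∩ D = {r₁, r₂}` and
`0 ∈ C`. -/
structure IsBalancedDifference (F : ℤ[X]) (m r₁ r₂ : ℕ) : Prop where
  mul_eq_expand : F * doubledInterval m r₁ r₂ = expand ℤ 2 F
  lt : r₁ < r₂
  le : r₂ ≤ m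
  odd : Odd r₁
  coeff_zero : F.coeff 0 = 1
  coeff_left : F.coeff r₁ = 0
  coeff_right : F.coeff r₂ = 0
  coeff_eq : ∀ n ≤ m, n ≠ r₁ → n ≠ r₂ → F.coeff n = 1 ∨ F.coeff n = -1

namespace IsBalancedDifference

lemma of_sets {C D : Set ℕ} {m r₁ r₂ : ℕ} (hunion : C ∪ D = Set.Icc 0 m)
    (hinter : C ∩ D = {r₁, r₂}) (hlt : r₁ < r₂) (h0 : 0 ∈ C) (hodd : Odd r₁)
    (hR : ∀ n, R C n = R D n) :
    IsBalancedDifference (indicatorPoly C - indicatorPoly D) m r₁ r₂ := by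
  have hfin : (C ∪ D).Finite := hunion ▸ Set.finite_Icc 0 m
  have hC : C.Finite := hfin.subset Set.subset_union_left
  have hD : D.Finite := hfin.subset Set.subset_union_right
  have hcoeff (n : ℕ) : (indicatorPoly C - indicatorPoly D).coeff n =
      C.indicator 1 n - D.indicator 1 n := by
    rw [coeff_sub, coeff_indicatorPoly hC, coeff_indicatorPoly hD]
  have hboth {n : ℕ} : n ∈ C ∧ n ∈ D ↔ n = r₁ ∨ n = r₂ := Set.ext_iff.mp hinter n
  have heither {n : ℕ} : n ∈ C ∨ n ∈ D ↔ n ≤ m := by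
    simpa using Set.ext_iff.mp hunion n
  have hmem₁ := hboth.mpr (Or.inl rfl)
  have hmem₂ := hboth.mpr (Or.inr rfl)
  refine ⟨?_, hlt, heither.mp (Or.inl hmem₂.1), hodd, ?_, ?_, ?_, fun n hn hn₁ hn₂ => ?_⟩
  · rw [← indicatorPoly_add_eq_doubledInterval hunion hinter hlt.ne]
    exact (R_eq_iff_mul_eq_expand hC hD).mp hR
  · simp [hcoeff, h0, zero_notMem_of_inter_eq_pair hinter hlt h0 hodd.pos]
  · simp [hcoeff, hmem₁]
  · simp [hcoeff, hmem₂]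
  · have hnot : ¬ (n ∈ C ∧ n ∈ D) := fun h => (hboth.mp h).elim hn₁ hn₂
    rcases heither.mpr hn with h | h
    · exact Or.inl (by simp [hcoeff, h, show n ∉ D from fun h' => hnot ⟨h, h'⟩])
    · exact Or.inr (by simp [hcoeff, h, show n ∉ C from fun h' => hnot ⟨h', h⟩])

variable {F : ℤ[X]} {m r₁ r₂ : ℕ}

lemma exists_add_three_eq_two_pow (h : IsBalancedDifference F m r₁ r₂) : ∃ a, m + 3 = 2 ^ a := by
  have hF : F ≠ 0 := by
    rintro rfl
    simpa using h.coeff_zero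
  obtain ⟨a, ha⟩ := exists_eval_one_eq_pow_of_mul_eq_expand hF h.mul_eq_expand
  rw [eval_one_doubledInterval] at ha
  exact ⟨a, by exact_mod_cast ha⟩

lemma coeff_doubledInterval_sub (h : IsBalancedDifference F m r₁ r₂) {n : ℕ} (hn : n ≤ m) :
    (doubledInterval m r₁ r₂).coeff (m - n) = (doubledInterval m r₁ r₂).coeff n := by
  have hdeg := natDegree_doubledInterval (h.lt.le.trans h.le) h.le
  have hreverse : (doubledInterval m r₁ r₂).reverse = doubledInterval m r₁ r₂ := by
    refine reverse_eq_self_of_mul_eq_expand one_lt_two h.mul_eq_expand (by simp [h.coeff_zero])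
      ?_ ?_
    · rw [coeff_doubledInterval, if_pos m.zero_le]
      positivity
    · rw [leadingCoeff, hdeg, coeff_doubledInterval, if_pos le_rfl]
      positivity
  conv_rhs => rw [← hreverse, coeff_reverse, hdeg, revAt_le hn]

lemma add_eq (h : IsBalancedDifference F m r₁ r₂) : r₁ + r₂ = m := by
  have hlt := h.lt
  have hle := h.le
  obtain ⟨a, ha⟩ := h.exists_add_three_eq_two_pow
  obtain ⟨k, hk⟩ : Even (m + 3) := by
    rw [ha, Nat.even_pow]
    refine ⟨even_two, ?_⟩
    rintro rfl
    omega
  have hsymm := h.coeff_doubledInterval_sub (hlt.le.trans hle)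
  simp only [coeff_doubledInterval] at hsymm
  split_ifs at hsymm <;> omega

lemma eight_dvd_add_add_three (h : IsBalancedDifference F m r₁ r₂) : 8 ∣ r₁ + r₂ + 3 := by
  obtain ⟨a, ha⟩ := h.exists_add_three_eq_two_pow
  have hadd := h.add_eq
  have hpos := h.odd.pos
  have hlt := h.lt
  have ha2 : 2 < a := (Nat.pow_lt_pow_iff_right one_lt_two).mp (by omega)
  rw [hadd, ha]
  exact pow_dvd_pow 2 ha2

lemma add_add_three_eq (h : IsBalancedDifference F m r₁ r₂) {e : ℕ}
    (hgt : 2 * 2 ^ e < r₁ + r₂ + 3) (hlt : r₁ + r₂ + 3 < 8 * 2 ^ e) :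
    r₁ + r₂ + 3 = 4 * 2 ^ e := by
  obtain ⟨a, ha⟩ := h.exists_add_three_eq_two_pow
  rw [h.add_eq, ha] at hgt hlt ⊢
  have hgt' : e + 1 < a := (Nat.pow_lt_pow_iff_right one_lt_two).mp (by rwa [pow_succ'])
  have hlt' : a < 3 + e := (Nat.pow_lt_pow_iff_right one_lt_two).mp (by rwa [pow_add])
  rw [show a = 2 + e by omega, pow_add]
  rfl

lemma coeff_recurrence (h : IsBalancedDifference F m r₁ r₂) {n : ℕ} (hn : n ≤ m) :
    F.coeff n + (if r₁ ≤ n then F.coeff (n - r₁) else 0) -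
          (if r₁ + 1 ≤ n then F.coeff (n - (r₁ + 1)) else 0) +
        (if r₂ ≤ n then F.coeff (n - r₂) else 0) -
      (if r₂ + 1 ≤ n then F.coeff (n - (r₂ + 1)) else 0) = (-1) ^ n * F.coeff (n / 2) := by
  have hpoly : F - F * X ^ (m + 1) + F * X ^ r₁ - F * X ^ (r₁ + 1) + F * X ^ r₂ -
      F * X ^ (r₂ + 1) = (1 - X) * expand ℤ 2 F := by
    rw [← h.mul_eq_expand, doubledInterval]
    linear_combination (-F) * indicatorPoly_Icc_mul_one_sub m
  rw [← coeff_one_sub_X_mul_expand_two, ← hpoly]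
  simp only [coeff_sub, coeff_add, coeff_mul_X_pow', if_neg (show ¬ m + 1 ≤ n by omega), sub_zero]

lemma coeff_of_lt_left (h : IsBalancedDifference F m r₁ r₂) {n : ℕ} (hn : n < r₁) :
    F.coeff n = (-1) ^ n * F.coeff (n / 2) := by
  have := h.lt
  have := h.le
  have hrec := h.coeff_recurrence (n := n) (by omega)
  rwa [if_neg (by omega), if_neg (by omega), if_neg (by omega), if_neg (by omega), add_zero,
    sub_zero, add_zero, sub_zero] at hrec

lemma coeff_left_div_two (h : IsBalancedDifference F m r₁ r₂) : F.coeff (r₁ / 2) = -1 := by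
  have := h.lt
  have hrec := h.coeff_recurrence (h.lt.le.trans h.le)
  rw [if_pos le_rfl, if_neg (by omega), if_neg (by omega), if_neg (by omega), h.odd.neg_one_pow,
    h.coeff_left, Nat.sub_self, h.coeff_zero] at hrec
  linarith

lemma coeff_left_add_one_add (h : IsBalancedDifference F m r₁ r₂) {i : ℕ} (hi : r₁ + 1 + i < r₂) :
    F.coeff (r₁ + 1 + i) + F.coeff (i + 1) - F.coeff i =
      (-1) ^ i * F.coeff ((r₁ + 1 + i) / 2) := by
  have hrec := h.coeff_recurrence (hi.le.trans h.le)
  rwa [if_pos (by omega), if_pos (by omega), if_neg (by omega), if_neg (by omega),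
    show r₁ + 1 + i - r₁ = i + 1 by omega, Nat.add_sub_cancel_left, add_zero, sub_zero, pow_add,
    h.odd.add_one.neg_one_pow, one_mul] at hrec

lemma coeff_right_div_two (h : IsBalancedDifference F m r₁ r₂) :
    F.coeff (r₂ - r₁) - F.coeff (r₂ - (r₁ + 1)) + 1 = (-1) ^ r₂ * F.coeff (r₂ / 2) := by
  have := h.lt
  have hrec := h.coeff_recurrence h.le
  rwa [if_pos (by omega), if_pos (by omega), if_pos le_rfl, if_neg (by omega), h.coeff_right,
    Nat.sub_self, h.coeff_zero, zero_add, sub_zero] at hrec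

lemma coeff_eq_thueMorse (h : IsBalancedDifference F m r₁ r₂) {n : ℕ} (hn : n < r₁) :
    F.coeff n = thueMorse n := by
  induction n using Nat.strong_induction_on with
  | _ n ih =>
    rcases n.eq_zero_or_pos with rfl | hpos
    · rw [h.coeff_zero, thueMorse_zero]
    · rw [h.coeff_of_lt_left hn, thueMorse_eq_mul_div_two, ih (n / 2) (by omega) (by omega)]

lemma thueMorse_left (h : IsBalancedDifference F m r₁ r₂) : thueMorse r₁ = 1 := by
  have hpos := h.odd.pos
  rw [thueMorse_eq_mul_div_two, h.odd.neg_one_pow, ← h.coeff_eq_thueMorse (by omega),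
    h.coeff_left_div_two]
  norm_num

lemma thueMorse_left_add_one_add (h : IsBalancedDifference F m r₁ r₂) {i : ℕ} (hi : Even i)
    (hi₁ : i + 1 < r₁) (hi₂ : r₁ + 1 + i < r₂) : thueMorse (r₁ + 1 + i) = -thueMorse i := by
  have hle := h.le
  have hhalf : thueMorse (r₁ + 1 + i) = thueMorse ((r₁ + 1 + i) / 2) := by
    rw [thueMorse_eq_mul_div_two, (h.odd.add_one.add hi).neg_one_pow, one_mul]
  have hsucc : thueMorse (i + 1) = -thueMorse i := by
    obtain ⟨j, rfl⟩ := hi.two_dvd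
    rw [thueMorse_two_mul_add_one, thueMorse_two_mul]
  have hrec := h.coeff_left_add_one_add hi₂
  rw [h.coeff_eq_thueMorse hi₁, h.coeff_eq_thueMorse (show i < r₁ by omega),
    h.coeff_eq_thueMorse (show (r₁ + 1 + i) / 2 < r₁ by omega), ← hhalf, hsucc, hi.neg_one_pow,
    one_mul] at hrec
  have hcoeff := h.coeff_eq (r₁ + 1 + i) (by omega) (by omega) (by omega)
  have := thueMorse_eq_one_or_neg_one i
  have := thueMorse_eq_one_or_neg_one (r₁ + 1 + i)
  omega

lemma three_le_left (h : IsBalancedDifference F m r₁ r₂) : 3 ≤ r₁ := by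
  obtain ⟨q, hq⟩ := h.odd
  have hne : r₁ ≠ 1 := fun h1 => by
    have := h.thueMorse_left
    rw [h1, thueMorse_one] at this
    norm_num at this
  omega

lemma thueMorse_left_add_one (h : IsBalancedDifference F m r₁ r₂) : thueMorse (r₁ + 1) = -1 := by
  have height := h.eight_dvd_add_add_three
  have hr := h.three_le_left
  have hlt := h.lt
  obtain ⟨q, hq⟩ := h.odd
  simpa [thueMorse_zero] using
    h.thueMorse_left_add_one_add (i := 0) Even.zero (by omega) (by omega)

lemma four_dvd_left_add_one (h : IsBalancedDifference F m r₁ r₂) : 4 ∣ r₁ + 1 := by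
  obtain ⟨q, rfl⟩ := h.odd
  have hq := h.thueMorse_left
  have hq' := h.thueMorse_left_add_one
  obtain ⟨w, rfl | rfl⟩ := q.even_or_odd'
  · rw [thueMorse_two_mul_add_one, thueMorse_two_mul] at hq
    rw [show 2 * (2 * w) + 1 + 1 = 2 * (2 * w + 1) by ring, thueMorse_two_mul,
      thueMorse_two_mul_add_one] at hq'
    omega
  · omega

lemma right_le (h : IsBalancedDifference F m r₁ r₂) {e : ℕ} (he : 2 ≤ e)
    (hlt : 2 ^ e < r₁ + 1) (hlt' : r₁ + 1 < 2 ^ (e + 1)) : r₂ ≤ r₁ + 1 + 2 ^ e := by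
  by_contra! hr₂
  have hfour := h.four_dvd_left_add_one
  have hfour' : 2 ^ 2 ∣ 2 ^ e := pow_dvd_pow 2 he
  obtain ⟨v, hv⟩ := Nat.exists_eq_add_of_le hlt.le
  have hv₁ : thueMorse (r₁ + 1) = -thueMorse v := by
    rw [hv, thueMorse_two_pow_add (by omega)]
  have hv₂ : thueMorse (r₁ + 1 + 2 ^ e) = -thueMorse v := by
    rw [show r₁ + 1 + 2 ^ e = 2 ^ (e + 1) + v by omega, thueMorse_two_pow_add (by omega)]
  have hadd := h.thueMorse_left_add_one_add (i := 2 ^ e) (by rw [Nat.even_iff]; omega)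
    (by omega) hr₂
  rw [thueMorse_two_pow, hv₂, ← hv₁, h.thueMorse_left_add_one] at hadd
  norm_num at hadd

/-- The recurrence at `r₂` would read `3 = ±1`. -/
lemma left_add_one_notMem_Ioo (h : IsBalancedDifference F m r₁ r₂) (e : ℕ) :
    r₁ + 1 ∉ Set.Ioo (2 ^ e) (2 ^ (e + 1)) := by
  rintro ⟨hlt, hlt'⟩
  have hr₁ := h.three_le_left
  have hr₁₂ := h.lt
  have hfour := h.four_dvd_left_add_one
  have he : 2 ≤ e := by
    have := (Nat.pow_lt_pow_iff_right one_lt_two).mp (show 2 ^ 1 < 2 ^ (e + 1) by omega)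
    have : e ≠ 1 := by rintro rfl; omega
    omega
  have hr₂ := h.right_le he hlt hlt'
  have hfour' : 2 ^ 2 ∣ 2 ^ e := pow_dvd_pow 2 he
  have hadd : r₁ + r₂ + 3 = 4 * 2 ^ e := h.add_add_three_eq (by omega) (by omega)
  obtain ⟨Q, hQ⟩ := Nat.exists_eq_add_of_lt hlt'
  have hQ₁ : thueMorse (Q + 1) = 1 := by
    have := h.thueMorse_left_add_one_add (i := Q + 1) (by rw [Nat.even_iff]; omega) (by omega)
      (by omega)
    rw [← add_assoc, ← hQ, thueMorse_two_pow] at this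
    omega
  have hQ₀ : thueMorse Q = -1 := by
    have hleft := thueMorse_two_pow_sub (k := e + 1) (v := Q + 1) (by omega)
    have hleft' := thueMorse_two_pow_sub (k := e + 1) (v := Q) (by omega)
    rw [show 2 ^ (e + 1) - 1 - (Q + 1) = r₁ by omega, h.thueMorse_left, hQ₁, mul_one] at hleft
    rw [show 2 ^ (e + 1) - 1 - Q = r₁ + 1 by omega, h.thueMorse_left_add_one, ← hleft,
      one_mul] at hleft'
    exact hleft'.symm
  have hr₂even : Even r₂ := by rw [Nat.even_iff]; omega
  have hrec := h.coeff_right_div_two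
  rw [show r₂ - r₁ = 2 * Q + 1 by omega, show r₂ - (r₁ + 1) = 2 * Q by omega,
    h.coeff_eq_thueMorse (by omega), h.coeff_eq_thueMorse (by omega), thueMorse_two_mul_add_one,
    thueMorse_two_mul, hQ₀, h.coeff_eq_thueMorse (by omega), neg_neg, hr₂even.neg_one_pow,
    one_mul] at hrec
  have := thueMorse_eq_one_or_neg_one (r₂ / 2)
  omega

lemma exists_left_add_one_eq_two_pow (h : IsBalancedDifference F m r₁ r₂) :
    ∃ k, r₁ + 1 = 2 ^ k := by
  by_contra! hne
  exact h.left_add_one_notMem_Ioo (Nat.log 2 (r₁ + 1))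
    ⟨(Nat.pow_log_le_self 2 r₁.succ_ne_zero).lt_of_ne (hne _).symm,
      Nat.lt_pow_succ_log_self one_lt_two _⟩

lemma even_of_left_add_one_eq_two_pow (h : IsBalancedDifference F m r₁ r₂) {k : ℕ}
    (hk : r₁ + 1 = 2 ^ k) : Even k := by
  rw [← neg_one_pow_eq_one_iff_even (R := ℤ) (by norm_num), ← thueMorse_two_pow_sub_one, ← hk,
    Nat.add_sub_cancel, h.thueMorse_left]

lemma two_le_of_left_add_one_eq_two_pow (h : IsBalancedDifference F m r₁ r₂) {k : ℕ}
    (hk : r₁ + 1 = 2 ^ k) : 2 ≤ k := by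
  have hr₁ := h.three_le_left
  exact (Nat.pow_lt_pow_iff_right one_lt_two).mp (show 2 ^ 1 < 2 ^ k by omega)

lemma coeff_left_add_one_div_two (h : IsBalancedDifference F m r₁ r₂) {k : ℕ}
    (hk : r₁ + 1 = 2 ^ k) : F.coeff ((r₁ + 1) / 2) = -1 := by
  have hr₁ := h.three_le_left
  obtain ⟨p, rfl⟩ := Nat.exists_eq_add_of_le' (h.two_le_of_left_add_one_eq_two_pow hk)
  have hpow : 2 ^ (p + 2) = 2 * 2 ^ (p + 1) := by ring
  rw [h.coeff_eq_thueMorse (by omega), show (r₁ + 1) / 2 = 2 ^ (p + 1) by omega, thueMorse_two_pow]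

lemma coeff_left_add_one (h : IsBalancedDifference F m r₁ r₂) {k : ℕ} (hk : r₁ + 1 = 2 ^ k)
    (hlt : r₁ + 1 < r₂) : F.coeff (r₁ + 1) = 1 := by
  have hr₁ := h.three_le_left
  have hrec := h.coeff_left_add_one_add (i := 0) hlt
  rw [zero_add, h.coeff_zero, h.coeff_eq_thueMorse (by omega : 1 < r₁), thueMorse_one, add_zero,
    h.coeff_left_add_one_div_two hk, pow_zero] at hrec
  linarith

lemma coeff_left_add_two (h : IsBalancedDifference F m r₁ r₂) {k : ℕ} (hk : r₁ + 1 = 2 ^ k)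
    (hlt : r₁ + 2 < r₂) : F.coeff (r₁ + 2) = 1 := by
  have hr₁ := h.three_le_left
  obtain ⟨q, hq⟩ := h.odd
  have hrec := h.coeff_left_add_one_add (i := 1) hlt
  rw [h.coeff_eq_thueMorse (by omega : 1 < r₁), h.coeff_eq_thueMorse (by omega : 1 + 1 < r₁),
    thueMorse_two_mul 1, show (r₁ + 1 + 1) / 2 = (r₁ + 1) / 2 by omega,
    h.coeff_left_add_one_div_two hk] at hrec
  linarith

lemma coeff_two_mul_left_add_one (h : IsBalancedDifference F m r₁ r₂) {k : ℕ}
    (hk : r₁ + 1 = 2 ^ k) (hlt : 2 * r₁ + 1 < r₂) : F.coeff (2 * r₁ + 1) = -1 := by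
  have hrec := h.coeff_left_add_one_add (i := r₁) (by omega)
  rw [h.coeff_left, h.coeff_left_add_one hk (by omega), show r₁ + 1 + r₁ = 2 * r₁ + 1 by ring,
    show (2 * r₁ + 1) / 2 = r₁ by omega, h.coeff_left] at hrec
  linarith

lemma coeff_two_mul_left_add_two (h : IsBalancedDifference F m r₁ r₂) {k : ℕ}
    (hk : r₁ + 1 = 2 ^ k) (hlt : 2 * r₁ + 2 < r₂) : F.coeff (2 * r₁ + 2) = 1 := by
  have hr₁ := h.three_le_left
  have hrec := h.coeff_left_add_one_add (i := r₁ + 1) (by omega)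
  rw [h.coeff_left_add_two hk (by omega), h.coeff_left_add_one hk (by omega),
    show r₁ + 1 + (r₁ + 1) = 2 * r₁ + 2 by ring, show (2 * r₁ + 2) / 2 = r₁ + 1 by omega,
    h.coeff_left_add_one hk (by omega), h.odd.add_one.neg_one_pow] at hrec
  linarith

lemma coeff_six_mul_two_pow_sub_one (h : IsBalancedDifference F m r₁ r₂) {p : ℕ}
    (hp : r₁ + 1 = 2 ^ (p + 2)) (hle : 6 * 2 ^ p ≤ r₂) : F.coeff (6 * 2 ^ p - 1) = 1 := by
  have hpos := Nat.two_pow_pos p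
  have hpow : 2 ^ (p + 2) = 4 * 2 ^ p := by ring
  have heven : Even p := by
    simpa [Nat.even_add] using h.even_of_left_add_one_eq_two_pow hp
  have hsub₂ : thueMorse (2 * 2 ^ p - 1) = -1 := by
    rw [← pow_succ', thueMorse_two_pow_sub_one, heven.add_one.neg_one_pow]
  have hsub₃ : thueMorse (3 * 2 ^ p - 1) = -1 := by
    rw [show 3 * 2 ^ p - 1 = 2 ^ (p + 1) + (2 ^ p - 1) by omega, thueMorse_two_pow_add (by omega),
      thueMorse_two_pow_sub_one, heven.neg_one_pow]
  have hrec := h.coeff_left_add_one_add (i := 2 * 2 ^ p - 1) (by omega)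
  rw [show r₁ + 1 + (2 * 2 ^ p - 1) = 6 * 2 ^ p - 1 by omega,
    show 2 * 2 ^ p - 1 + 1 = (r₁ + 1) / 2 by omega, h.coeff_left_add_one_div_two hp,
    h.coeff_eq_thueMorse (by omega : 2 * 2 ^ p - 1 < r₁), hsub₂,
    show (6 * 2 ^ p - 1) / 2 = 3 * 2 ^ p - 1 by omega,
    h.coeff_eq_thueMorse (by omega : 3 * 2 ^ p - 1 < r₁), hsub₃,
    Odd.neg_one_pow (by rw [Nat.odd_iff]; omega)] at hrec
  linarith

/-- Otherwise the recurrence at `3 * r₁ + 2` gives `F.coeff (3 * r₁ + 2) = -3`. -/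
lemma add_add_three_lt (h : IsBalancedDifference F m r₁ r₂) {k : ℕ} (hk : r₁ + 1 = 2 ^ k) :
    r₁ + r₂ + 3 < 8 * 2 ^ k := by
  by_contra! hge
  have hle := h.le
  have hr₁ := h.three_le_left
  obtain ⟨p, rfl⟩ := Nat.exists_eq_add_of_le' (h.two_le_of_left_add_one_eq_two_pow hk)
  have hpow : 2 ^ (p + 2) = 4 * 2 ^ p := by ring
  have hrec := h.coeff_left_add_one_add (i := 2 * r₁ + 1) (by omega)
  rw [h.coeff_two_mul_left_add_one hk (by omega), h.coeff_two_mul_left_add_two hk (by omega),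
    show (r₁ + 1 + (2 * r₁ + 1)) / 2 = 6 * 2 ^ p - 1 by omega,
    h.coeff_six_mul_two_pow_sub_one hk (by omega), (odd_two_mul_add_one r₁).neg_one_pow] at hrec
  have := h.coeff_eq (r₁ + 1 + (2 * r₁ + 1)) (by omega) (by omega) (by omega)
  omega

lemma exists_parameters (h : IsBalancedDifference F m r₁ r₂) :
    ∃ l : ℕ, 0 < l ∧ r₁ = 2 ^ (2 * l) - 1 ∧ r₂ = 2 ^ (2 * l + 1) + 2 ^ (2 * l) - 2 ∧
      m = 2 ^ (2 * l + 2) - 3 := by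
  obtain ⟨k, hk⟩ := h.exists_left_add_one_eq_two_pow
  obtain ⟨l, rfl⟩ := (h.even_of_left_add_one_eq_two_pow hk).two_dvd
  have hl := h.two_le_of_left_add_one_eq_two_pow hk
  have hlt := h.lt
  have hadd := h.add_eq
  have hfour := h.add_add_three_eq (by omega) (h.add_add_three_lt hk)
  have hpow : 2 ^ (2 * l + 2) = 4 * 2 ^ (2 * l) := by ring
  exact ⟨l, by omega, by omega, by omega, by omega⟩

end IsBalancedDifference

end

theorem stmt9 (m r1 r2 : ℕ) (hm : 3 ≤ m) (C D : Set ℕ)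
    (h1 : C ∪ D = Set.Icc 0 m) (h2 : C ∩ D = {r1, r2}) (h3 : r1 < r2)
    (h4 : (0 : ℕ) ∈ C) (h5 : Odd r1) :
    (∀ n : ℕ, R C n = R D n) ↔
      ∃ l : ℕ, 0 < l ∧ r1 = 2 ^ (2 * l) - 1 ∧ r2 = 2 ^ (2 * l + 1) + 2 ^ (2 * l) - 2 ∧
        m = 2 ^ (2 * l + 2) - 3 ∧
        C = Al (2 * l) ∪ ((fun x => 2 ^ (2 * l) - 1 + x) '' Bl (2 * l)) ∪
              ((fun x => 2 ^ (2 * l + 1) - 1 + x) ''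
                (Bl (2 * l) ∪ ((fun x => 2 ^ (2 * l) - 1 + x) '' Al (2 * l)))) ∧
        D = Bl (2 * l) ∪ ((fun x => 2 ^ (2 * l) - 1 + x) '' Al (2 * l)) ∪
              ((fun x => 2 ^ (2 * l + 1) - 1 + x) ''
                (Al (2 * l) ∪ ((fun x => 2 ^ (2 * l) - 1 + x) '' Bl (2 * l)))) := by
  have hfin : (C ∪ D).Finite := h1 ▸ Set.finite_Icc 0 m
  have hC : C.Finite := hfin.subset Set.subset_union_left
  have hD : D.Finite := hfin.subset Set.subset_union_right
  constructor
  · intro hR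
    have h0D := zero_notMem_of_inter_eq_pair h2 h3 h4 h5.pos
    obtain ⟨l, hl, rfl, rfl, rfl⟩ :=
      (IsBalancedDifference.of_sets h1 h2 h3 h4 h5 hR).exists_parameters
    refine ⟨l, hl, rfl, rfl, rfl, ?_⟩
    have hadd := (indicatorPoly_add_eq_doubledInterval h1 h2 h3.ne).trans
      (indicatorPoly_extremalC_add_indicatorPoly_extremalD (even_two_mul l)).symm
    exact eq_of_indicatorPoly_add_eq hC hD (finite_extremalC _) (finite_extremalD _) hR
      (R_extremalC_eq_R_extremalD (even_two_mul l)) hadd h4 h0D (zero_mem_extremalC _)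
      (zero_notMem_extremalD (by omega))
  · rintro ⟨l, -, -, -, -, rfl, rfl⟩
    exact R_extremalC_eq_R_extremalD (even_two_mul l)
end
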